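/- arXiv:1707.00528 — 2 statements merged into one kernel-verified Lean document; each statement's English description precedes it below -/
import Mathlib

section
/- Let d ≥ 1 and let u : ℝ → 𝒮(ℝ^d; ℂ) be a Schwartz solution of the linear Schrödinger equation. Let φ : ℝ^d → ℝ be a bounded continuously differentiable function with bounded gradient. Then for every t ∈ ℝ, the function t ↦ ∫_{ℝ^d} φ(x)² |u(t,x)|² dx is differentiable and d/dt ∫_{ℝ^d} φ(x)² |u(t,x)|² dx = 4 Im ∫_{ℝ^d} φ(x) · conj(u(t,x)) · (∇φ(x) · ∇_x u(t,x)) dx. -/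
open MeasureTheory Filter
open scoped RealInnerProductSpace

noncomputable section

abbrev Ed (d : ℕ) : Type := EuclideanSpace ℝ (Fin d)

/-- The `i`-th standard basis vector of `ℝ^d`. -/
def stdBasis {d : ℕ} (i : Fin d) : Ed d := EuclideanSpace.single i 1

/-- The `i`-th spatial partial derivative. -/
def pd {d : ℕ} (f : Ed d → ℂ) (i : Fin d) (x : Ed d) : ℂ :=
  fderiv ℝ f x (stdBasis i)

/-- The spatial Laplacian. -/
def lap {d : ℕ} (f : Ed d → ℂ) (x : Ed d) : ℂ :=
  ∑ i, pd (pd f i) i x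

/-- Squared (Euclidean) pointwise norm of the spatial gradient. -/
def gradNormSq {d : ℕ} (f : Ed d → ℂ) (x : Ed d) : ℝ :=
  ∑ i, ‖pd f i x‖ ^ 2

/-- `L²` norm of `f` restricted to a set `s`. -/
def L2On {d : ℕ} (s : Set (Ed d)) (f : Ed d → ℂ) : ℝ :=
  (∫ x in s, ‖f x‖ ^ 2) ^ (1/2 : ℝ)

/-- `L²` norm of `f` on all of `ℝ^d`. -/
def L2 {d : ℕ} (f : Ed d → ℂ) : ℝ :=
  (∫ x, ‖f x‖ ^ 2) ^ (1/2 : ℝ)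

/-- `L²` norm of the spatial gradient of `f`. -/
def gradL2 {d : ℕ} (f : Ed d → ℂ) : ℝ :=
  (∫ x, gradNormSq f x) ^ (1/2 : ℝ)

/-- Distance between two sets. -/
def setDist {d : ℕ} (A B : Set (Ed d)) : ℝ :=
  sInf (Set.image2 dist A B)

/-- A Schwartz solution of the linear Schrödinger equation:
smooth in time-space and `∂ₜ u = i Δ u`. -/
def IsLinSchrodSol (d : ℕ) (u : ℝ → SchwartzMap (Ed d) ℂ) : Prop :=
  ContDiff ℝ (⊤ : ℕ∞) (fun p : ℝ × Ed d => u p.1 p.2) ∧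
  ∀ t x, deriv (fun s => u s x) t = Complex.I * lap (u t) x

/-- A Schwartz solution of the nonlinear Schrödinger equation with parameters `lam, σ`:
smooth in time-space and `∂ₜ u = i (Δ u + lam |u|^σ u)`. -/
def IsNLSSol (d : ℕ) (lam σ : ℝ) (u : ℝ → SchwartzMap (Ed d) ℂ) : Prop :=
  ContDiff ℝ (⊤ : ℕ∞) (fun p : ℝ × Ed d => u p.1 p.2) ∧
  ∀ t x, deriv (fun s => u s x) t =
    Complex.I * (lap (u t) x + ((lam * ‖u t x‖ ^ σ : ℝ) : ℂ) * u t x)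

/-!
The localized mass obeys the continuity equation `∂ₜ|u|² = -2 div Im(ū ∇u)`: integrating it against
`φ²` and moving the divergence onto `φ²` gives `2 ∫ ∇(φ²) · Im(ū ∇u) = 4 Im ∫ φ ū ∇φ · ∇u`.

The difficulty is to differentiate under the integral sign, because joint smoothness of `u` in
`(t, x)` with Schwartz slices gives no bound on `u t` at infinity that is locally uniform in `t`.
It is recovered from the rigidity `u t = exp (i t Δ) (u 0)`. On an interval where `‖u t‖₂` is
bounded this follows by pairing `u` with a free solution `exp (i t Δ) ψ` and a spatial cutoff
`χ (c x)`: the commutator `[Δ, χ (c ·)]` tends to zero with `c`, so the pairing is constant in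
time. To remove the boundedness, apply Baire's theorem to the closed set `K` of times near which
`exp (-i t Δ) (u t)` is not locally constant. Were `K` nonempty, the lower semicontinuous function
`‖u t‖₂` would be bounded on a nonempty relatively open piece of `K`, hence, being constant on the
intervals complementary to `K` and preserved in the limit to their endpoints, on a whole interval
around a point of `K`.
-/

open scoped FourierTransform Laplacian SchwartzMap LineDeriv Topology ENNReal Real
open SchwartzMap

section LpConvergence

variable {α F : Type*} [MeasurableSpace α] {μ : Measure α} [NormedAddCommGroup F] {p : ℝ≥0∞}

theorem tendsto_eLpNorm_zero_of_dominated {ι : Type*} {l : Filter ι} [l.IsCountablyGenerated]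
    {f : ι → α → F} {bound : α → ℝ} (hp : p ≠ ⊤)
    (hf : ∀ n, MemLp (f n) p μ) (hbound : MemLp bound p μ)
    (h_le : ∀ᶠ n in l, ∀ x, ‖f n x‖ ≤ bound x) (h_lim : ∀ x, Tendsto (f · x) l (𝓝 0)) :
    Tendsto (fun n => eLpNorm (f n) p μ) l (𝓝 0) := by
  rcases eq_or_ne p 0 with rfl | hp₀
  · simpa only [eLpNorm_exponent_zero] using tendsto_const_nhds
  have hpos : 0 < p.toReal := ENNReal.toReal_pos hp₀ hp
  have h_int : Tendsto (fun n => ∫ x, ‖f n x‖ ^ p.toReal ∂μ) l (𝓝 (∫ _, 0 ∂μ)) := by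
    refine tendsto_integral_filter_of_dominated_convergence (fun x => ‖bound x‖ ^ p.toReal)
      (.of_forall fun n => ((hf n).integrable_norm_rpow hp₀ hp).1)
      (h_le.mono fun n hn => ae_of_all _ fun x => ?_) (hbound.integrable_norm_rpow hp₀ hp)
      (ae_of_all _ fun x => ?_)
    · rw [Real.norm_of_nonneg (by positivity)]
      gcongr
      exact (hn x).trans (le_abs_self _)
    · simpa [hpos.ne'] using (h_lim x).norm.rpow_const (.inr hpos.le)
  simp only [(hf _).eLpNorm_eq_integral_rpow_norm hp₀ hp]
  simpa [hpos.ne'] using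
    ENNReal.tendsto_ofReal (h_int.rpow_const (.inr (inv_nonneg.2 hpos.le)))

theorem hasDerivAt_toLp_of_dominated [NormedSpace ℝ F] [Fact (1 ≤ p)] (hp : p ≠ ⊤)
    {w w' : ℝ → α → F} {t ε : ℝ} {bound : α → ℝ} (hε : 0 < ε)
    (hw : ∀ s, MemLp (w s) p μ) (hw' : MemLp (w' t) p μ) (hbound : MemLp bound p μ)
    (h_le : ∀ s ∈ Metric.ball t ε, ∀ x, ‖w' s x‖ ≤ bound x)
    (h_deriv : ∀ s ∈ Metric.ball t ε, ∀ x, HasDerivAt (w · x) (w' s x) s) :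
    HasDerivAt (fun s => (hw s).toLp) hw'.toLp t := by
  have ht : t ∈ Metric.ball t ε := Metric.mem_ball_self hε
  have hslope (s : ℝ) : MemLp (fun x => slope (w · x) t s) p μ :=
    ((hw s).sub (hw t)).const_smul (s - t)⁻¹
  have h_slope_toLp : slope (fun s => (hw s).toLp) t = fun s => (hslope s).toLp := by
    ext1 s
    rw [slope_def_module, ← MemLp.toLp_sub, ← MemLp.toLp_const_smul]
    rfl
  rw [hasDerivAt_iff_tendsto_slope, h_slope_toLp, Lp.tendsto_Lp_iff_tendsto_eLpNorm'']
  refine tendsto_eLpNorm_zero_of_dominated hp (fun s => (hslope s).sub hw')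
    (hbound.add hbound) ?_ fun x => ?_
  · filter_upwards [nhdsWithin_le_nhds (Metric.ball_mem_nhds t hε), self_mem_nhdsWithin]
      with s hs hst x
    have h_lip : ‖w s x - w t x‖ ≤ bound x * ‖s - t‖ :=
      (convex_ball t ε).norm_image_sub_le_of_norm_hasDerivWithin_le
        (fun r hr => (h_deriv r hr x).hasDerivWithinAt) (fun r hr => h_le r hr x) ht hs
    refine (norm_sub_le _ _).trans (add_le_add ?_ (h_le t ht x))
    change ‖(s - t)⁻¹ • (w s x - w t x)‖ ≤ bound x
    rwa [norm_smul, norm_inv, inv_mul_le_iff₀' (norm_pos_iff.2 (sub_ne_zero.2 hst))]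
  · simpa only [Pi.sub_apply, sub_self] using
      (hasDerivAt_iff_tendsto_slope.1 (h_deriv t ht x)).sub_const (w' t x)

theorem isClosed_setOf_eLpNorm_le {X : Type*} [TopologicalSpace X] [SequentialSpace X]
    {w : X → α → F} (hw : ∀ s, AEStronglyMeasurable (w s) μ) (h_cont : ∀ x, Continuous (w · x))
    (c : ℝ≥0∞) : IsClosed {s | eLpNorm (w s) p μ ≤ c} := by
  refine IsSeqClosed.isClosed fun s t hs hst => ?_
  calc
    eLpNorm (w t) p μ ≤ liminf (fun n => eLpNorm (w (s n)) p μ) atTop :=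
      Lp.eLpNorm_lim_le_liminf_eLpNorm (fun n => hw (s n)) _
        (ae_of_all _ fun x => ((h_cont x).tendsto t).comp hst)
    _ ≤ liminf (fun _ : ℕ => c) atTop := liminf_le_liminf (.of_forall hs)
    _ = c := liminf_const c

end LpConvergence

section BaireRigidity

variable {X α : Type*} {v : X → α}

theorem isOpen_setOf_eventually_eq [TopologicalSpace X] :
    IsOpen {x | ∀ᶠ y in 𝓝 x, v y = v x} := by
  refine isOpen_iff_mem_nhds.2 fun x hx => ?_
  filter_upwards [hx, eventually_eventually_nhds.2 hx] with y hy hyz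
  exact hyz.mono fun z hz => hz.trans hy.symm

theorem mapsTo_of_mapsTo_inter_not_eventually_eq [TopologicalSpace X]
    (h_fiber : ∀ a, IsClosed (v ⁻¹' {a})) {B : Set X} (hB : IsOpen B) (hB' : IsPreconnected B)
    {C : Set α} (hC : ∀ x ∈ B, (¬∀ᶠ y in 𝓝 x, v y = v x) → v x ∈ C)
    {p : X} (hpB : p ∈ B) (hp : v p ∈ C) : Set.MapsTo v B C := by
  intro x hx
  by_contra hxC
  have h_open : IsOpen (B ∩ v ⁻¹' {v x}) := by
    refine isOpen_iff_mem_nhds.2 fun y ⟨hyB, hy⟩ => ?_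
    have h_loc : ∀ᶠ z in 𝓝 y, v z = v y := by
      by_contra h_not
      exact hxC (hy ▸ hC y hyB h_not)
    filter_upwards [hB.mem_nhds hyB, h_loc] with z hzB hz using ⟨hzB, hz.trans hy⟩
  have h_const : B ⊆ B ∩ v ⁻¹' {v x} :=
    hB'.subset_of_closure_inter_subset h_open ⟨x, hx, hx, rfl⟩ fun y hy =>
      ⟨hy.2, closure_minimal Set.inter_subset_right (h_fiber _) hy.1⟩
  exact hxC ((h_const hpB).2 ▸ hp)

theorem isLocallyConstant_of_iUnion_eq_univ [MetricSpace X] [CompleteSpace X]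
    [LocallyConnectedSpace X] {C : ℕ → Set α} (h_fiber : ∀ a, IsClosed (v ⁻¹' {a}))
    (h_closed : ∀ n, IsClosed (v ⁻¹' C n)) (h_iUnion : ⋃ n, C n = Set.univ)
    (h_const : ∀ n U, IsOpen U → IsPreconnected U → Set.MapsTo v U (C n) →
      ∀ x ∈ U, ∀ y ∈ U, v x = v y) :
    IsLocallyConstant v := by
  rw [IsLocallyConstant.iff_eventually_eq]
  by_contra h_bad
  set K := {x | ∀ᶠ y in 𝓝 x, v y = v x}ᶜ
  have hK_closed : IsClosed K := isOpen_setOf_eventually_eq.isClosed_compl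
  have : CompleteSpace K := hK_closed.completeSpace_coe
  have : Nonempty K := let ⟨x, hx⟩ := not_forall.1 h_bad; ⟨x, hx⟩
  obtain ⟨n, ⟨p, hpK⟩, hp⟩ := nonempty_interior_of_iUnion_of_closed
    (f := fun n => ((↑) : K → X) ⁻¹' (v ⁻¹' C n))
    (fun n => (h_closed n).preimage continuous_subtype_val)
    (by simp only [← Set.preimage_iUnion, h_iUnion, Set.preimage_univ])
  obtain ⟨W, hW, hWC⟩ := mem_nhds_subtype K _ _ |>.1 (mem_interior_iff_mem_nhds.1 hp)
  obtain ⟨B, hBW, hB, hpB, hB'⟩ :=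
    locallyConnectedSpace_iff_subsets_isOpen_isConnected.1 ‹_› p W hW
  have h_maps : Set.MapsTo v B (C n) :=
    mapsTo_of_mapsTo_inter_not_eventually_eq h_fiber hB hB'.isPreconnected
      (fun x hxB hxK => hWC (a := ⟨x, hxK⟩) (hBW hxB)) hpB (hWC (a := ⟨p, hpK⟩) (hBW hpB))
  exact hpK <| eventually_of_mem (hB.mem_nhds hpB) fun x hx =>
    h_const n B hB hB'.isPreconnected h_maps x hx p hpB

end BaireRigidity

section FreePropagator

open Complex (I)

theorem hasDerivAt_cexp_ofReal_mul_I (r : ℝ) :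
    HasDerivAt (fun r : ℝ => Complex.exp (r * I)) (I * Complex.exp (r * I)) r := by
  simpa [mul_comm I] using (Complex.ofRealCLM.hasDerivAt (x := r)).mul_const I |>.cexp

theorem iteratedDeriv_cexp_ofReal_mul_I (n : ℕ) :
    iteratedDeriv n (fun r : ℝ => Complex.exp (r * I)) =
      fun r : ℝ => I ^ n * Complex.exp (r * I) := by
  induction n with
  | zero => simp
  | succ n ih =>
    ext r
    rw [iteratedDeriv_succ, ih, ((hasDerivAt_cexp_ofReal_mul_I r).const_mul (I ^ n)).deriv,
      pow_succ, mul_assoc]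

theorem hasTemperateGrowth_cexp_ofReal_mul_I :
    (fun r : ℝ => Complex.exp (r * I)).HasTemperateGrowth := by
  refine ⟨(Complex.ofRealCLM.contDiff.mul contDiff_const).cexp, fun n => ⟨0, 1, fun r => ?_⟩⟩
  rw [norm_iteratedFDeriv_eq_norm_iteratedDeriv, iteratedDeriv_cexp_ofReal_mul_I]
  simp [Complex.norm_exp_ofReal_mul_I]

variable {E : Type*} [NormedAddCommGroup E]

/-- The Fourier multiplier of `exp (i t Δ)`, with Mathlib's normalization
`𝓕 f ξ = ∫ exp (-2 π i ⟪x, ξ⟫) f x` of the Fourier transform. -/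
def freeSymbol (t : ℝ) (ξ : E) : ℂ :=
  Complex.exp ((-((2 * π) ^ 2 * t * ‖ξ‖ ^ 2) : ℝ) * I)

theorem norm_freeSymbol (t : ℝ) (ξ : E) : ‖freeSymbol t ξ‖ = 1 :=
  Complex.norm_exp_ofReal_mul_I _

theorem freeSymbol_zero : (freeSymbol 0 : E → ℂ) = 1 := by
  ext ξ
  simp [freeSymbol]

theorem freeSymbol_add (s t : ℝ) :
    (freeSymbol (s + t) : E → ℂ) = freeSymbol s * freeSymbol t := by
  ext ξ
  rw [Pi.mul_apply, freeSymbol, freeSymbol, freeSymbol, ← Complex.exp_add]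
  push_cast
  ring_nf

theorem hasDerivAt_freeSymbol (t : ℝ) (ξ : E) :
    HasDerivAt (fun s => freeSymbol s ξ)
      (I * (-((2 * π) ^ 2 * ‖ξ‖ ^ 2 : ℝ) * freeSymbol t ξ)) t := by
  have h_phase : HasDerivAt (fun s : ℝ => -((2 * π) ^ 2 * s * ‖ξ‖ ^ 2))
      (-((2 * π) ^ 2 * 1 * ‖ξ‖ ^ 2)) t :=
    ((((hasDerivAt_id t).const_mul _).mul_const _)).neg
  refine (h_phase.ofReal_comp.mul_const I).cexp.congr_deriv ?_
  rw [freeSymbol]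
  push_cast
  ring

variable [InnerProductSpace ℝ E]

theorem hasTemperateGrowth_freeSymbol (t : ℝ) : (freeSymbol t : E → ℂ).HasTemperateGrowth := by
  have h_phase : (fun ξ : E => -((2 * π) ^ 2 * t * ‖ξ‖ ^ 2)).HasTemperateGrowth := by fun_prop
  exact hasTemperateGrowth_cexp_ofReal_mul_I.comp h_phase

variable [FiniteDimensional ℝ E] [MeasurableSpace E] [BorelSpace E]

theorem fourier_fourierMultiplierCLM_apply {g : E → ℂ} (hg : g.HasTemperateGrowth)
    (f : 𝓢(E, ℂ)) (ξ : E) : 𝓕 (fourierMultiplierCLM ℂ g f) ξ = g ξ * 𝓕 f ξ := by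
  rw [fourierMultiplierCLM_apply, FourierTransform.fourier_fourierInv_eq,
    smulLeftCLM_apply_apply hg, smul_eq_mul]

theorem fourier_laplacian_apply (f : 𝓢(E, ℂ)) (ξ : E) :
    𝓕 (Δ f) ξ = -((2 * π) ^ 2 * ‖ξ‖ ^ 2 : ℝ) * 𝓕 f ξ := by
  rw [laplacian_eq_fourierMultiplierCLM, FourierTransform.fourier_smul, fourierMultiplierCLM_apply,
    FourierTransform.fourier_fourierInv_eq, _root_.smul_apply,
    smulLeftCLM_apply_apply (by fun_prop)]
  simp only [Complex.real_smul, Complex.ofReal_pow, neg_smul, Complex.ofReal_mul,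
    Complex.ofReal_ofNat]
  ring

theorem fourier_lineDerivOp_apply (m : E) (f : 𝓢(E, ℂ)) (ξ : E) :
    𝓕 (∂_{m} f) ξ = 2 * π * I * (inner ℝ ξ m * 𝓕 f ξ) := by
  rw [fourier_lineDerivOp_eq, _root_.smul_apply, smulLeftCLM_apply_apply (by fun_prop)]
  simp

theorem schwartzMap_ext_fourier {f g : 𝓢(E, ℂ)} (h : ∀ ξ, 𝓕 f ξ = 𝓕 g ξ) : f = g := by
  rw [← FourierTransform.fourierInv_fourier_eq (F := 𝓢(E, ℂ)) f, SchwartzMap.ext h,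
    FourierTransform.fourierInv_fourier_eq]

/-- The free Schrödinger group `exp (i t Δ)` on Schwartz functions. -/
def freePropagator (t : ℝ) : 𝓢(E, ℂ) →L[ℂ] 𝓢(E, ℂ) :=
  fourierMultiplierCLM ℂ (freeSymbol t)

theorem fourier_freePropagator_apply (t : ℝ) (f : 𝓢(E, ℂ)) (ξ : E) :
    𝓕 (freePropagator t f) ξ = freeSymbol t ξ * 𝓕 f ξ :=
  fourier_fourierMultiplierCLM_apply (hasTemperateGrowth_freeSymbol t) f ξ

theorem freePropagator_zero (f : 𝓢(E, ℂ)) : freePropagator 0 f = f :=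
  schwartzMap_ext_fourier fun ξ => by simp [fourier_freePropagator_apply, freeSymbol_zero]

theorem freePropagator_freePropagator (s t : ℝ) (f : 𝓢(E, ℂ)) :
    freePropagator s (freePropagator t f) = freePropagator (s + t) f :=
  schwartzMap_ext_fourier fun ξ => by
    simp [fourier_freePropagator_apply, freeSymbol_add, mul_assoc]

theorem freePropagator_neg_apply_self (t : ℝ) (f : 𝓢(E, ℂ)) :
    freePropagator (-t) (freePropagator t f) = f := by
  rw [freePropagator_freePropagator, neg_add_cancel, freePropagator_zero]

theorem laplacian_freePropagator (t : ℝ) (f : 𝓢(E, ℂ)) :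
    Δ (freePropagator t f) = freePropagator t (Δ f) :=
  schwartzMap_ext_fourier fun ξ => by
    simp only [fourier_freePropagator_apply, fourier_laplacian_apply]
    ring

theorem lineDerivOp_freePropagator (t : ℝ) (m : E) (f : 𝓢(E, ℂ)) :
    ∂_{m} (freePropagator t f) = freePropagator t (∂_{m} f) :=
  schwartzMap_ext_fourier fun ξ => by
    simp only [fourier_freePropagator_apply, fourier_lineDerivOp_apply]
    ring

theorem inner_toLp_freePropagator (t : ℝ) (f g : 𝓢(E, ℂ)) :
    inner ℂ ((freePropagator t f).toLp 2) ((freePropagator t g).toLp 2) =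
      inner ℂ (f.toLp 2) (g.toLp 2) := by
  rw [← inner_fourier_toL2_eq, ← inner_fourier_toL2_eq f, inner_toL2_toL2_eq _ _ volume,
    inner_toL2_toL2_eq _ _ volume]
  congr 1 with ξ
  have h_unit : freeSymbol t ξ * starRingEnd ℂ (freeSymbol t ξ) = 1 := by
    rw [Complex.mul_conj', norm_freeSymbol, Complex.ofReal_one, one_pow]
  simp only [fourier_freePropagator_apply, RCLike.inner_apply, map_mul]
  linear_combination 𝓕 g ξ * starRingEnd ℂ (𝓕 f ξ) * h_unit

theorem norm_toLp_freePropagator (t : ℝ) (f : 𝓢(E, ℂ)) :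
    ‖(freePropagator t f).toLp 2‖ = ‖f.toLp 2‖ := by
  simp only [@norm_eq_sqrt_re_inner ℂ, inner_toLp_freePropagator]

theorem continuous_freePropagator_apply (f : 𝓢(E, ℂ)) (x : E) :
    Continuous fun t => freePropagator t f x := by
  have h_inv (t : ℝ) : freePropagator t f x =
      ∫ ξ, Complex.exp (↑(2 * π * inner ℝ ξ x) * I) • (freeSymbol t ξ * 𝓕 f ξ) := by
    rw [← FourierTransform.fourierInv_fourier_eq (F := 𝓢(E, ℂ)) (freePropagator t f),
      fourierInv_coe, Real.fourierInv_eq']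
    simp only [fourier_freePropagator_apply]
  simp only [h_inv]
  refine continuous_of_dominated (bound := fun ξ => ‖𝓕 f ξ‖) (fun t => ?_)
    (fun t => ae_of_all _ fun ξ => ?_) (𝓕 f).integrable.norm (ae_of_all _ fun ξ => ?_)
  · have := (hasTemperateGrowth_freeSymbol (E := E) t).1.continuous
    exact Continuous.aestronglyMeasurable (by fun_prop)
  · rw [norm_smul, Complex.norm_exp_ofReal_mul_I, norm_mul, norm_freeSymbol, one_mul, one_mul]
  · have : Continuous fun t => freeSymbol t ξ :=
      continuous_iff_continuousAt.2 fun t => (hasDerivAt_freeSymbol t ξ).continuousAt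
    fun_prop

theorem hasDerivAt_toLp_freePropagator (f : 𝓢(E, ℂ)) (t : ℝ) :
    HasDerivAt (fun s => (freePropagator s f).toLp 2)
      ((I • Δ (freePropagator t f)).toLp 2) t := by
  have h_fourier : HasDerivAt (fun s => (𝓕 (freePropagator s f)).toLp 2)
      ((𝓕 (I • Δ (freePropagator t f))).toLp 2) t := by
    refine hasDerivAt_toLp_of_dominated (w' := fun s ξ => 𝓕 (I • Δ (freePropagator s f)) ξ)
      (by simp) one_pos (fun s => (𝓕 (freePropagator s f)).memLp 2) (SchwartzMap.memLp _ 2)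
      ((𝓕 (Δ f)).memLp 2).norm (fun s _ ξ => ?_) fun s _ ξ => ?_
    · simp [laplacian_freePropagator, fourier_freePropagator_apply, FourierTransform.fourier_smul,
        norm_freeSymbol]
    · simp only [fourier_freePropagator_apply]
      refine ((hasDerivAt_freeSymbol s ξ).mul_const (𝓕 f ξ)).congr_deriv ?_
      rw [FourierTransform.fourier_smul, _root_.smul_apply, fourier_laplacian_apply,
        fourier_freePropagator_apply, smul_eq_mul]
      ring
  have h_inv := ((FourierTransform.fourierInvCLM ℂ (Lp ℂ 2 (volume : Measure E))).restrictScalars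
    ℝ).hasFDerivAt.comp_hasDerivAt t h_fourier
  simpa [Function.comp_def, toLp_fourierInv_eq] using h_inv

end FreePropagator

section Cutoff

variable {E F : Type*} [NormedAddCommGroup E] [NormedAddCommGroup F] [NormedSpace ℝ F]

section Product

variable [NormedSpace ℝ E]

theorem lineDerivOp_pairing {G H : Type*} [NormedAddCommGroup G] [NormedSpace ℝ G]
    [NormedAddCommGroup H] [NormedSpace ℝ H] (B : F →L[ℝ] G →L[ℝ] H) (m : E) (f : 𝓢(E, F))
    (g : 𝓢(E, G)) :
    ∂_{m} (pairing B f g) = pairing B (∂_{m} f) g + pairing B f (∂_{m} g) := by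
  ext x
  rw [lineDerivOp_apply_eq_fderiv, pairing_apply,
    (B.hasFDerivAt_of_bilinear (f.hasFDerivAt x) (g.hasFDerivAt x)).fderiv]
  simp [lineDerivOp_apply_eq_fderiv, add_comm]

/-- The product of a real-valued and a vector-valued Schwartz function. -/
def schwartzSMul (χ : 𝓢(E, ℝ)) (f : 𝓢(E, F)) : 𝓢(E, F) :=
  pairing (ContinuousLinearMap.lsmul ℝ ℝ) χ f

theorem schwartzSMul_apply (χ : 𝓢(E, ℝ)) (f : 𝓢(E, F)) (x : E) :
    schwartzSMul χ f x = χ x • f x :=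
  pairing_apply_apply _ χ f x

theorem lineDerivOp_schwartzSMul (m : E) (χ : 𝓢(E, ℝ)) (f : 𝓢(E, F)) :
    ∂_{m} (schwartzSMul χ f) = schwartzSMul (∂_{m} χ) f + schwartzSMul χ (∂_{m} f) :=
  lineDerivOp_pairing _ m χ f

/-- The dilation `x ↦ f (c x)` of a Schwartz function. -/
def schwartzDilate (c : ℝˣ) (f : 𝓢(E, F)) : 𝓢(E, F) :=
  compCLMOfContinuousLinearEquiv ℝ (ContinuousLinearEquiv.smulLeft c) f

theorem schwartzDilate_apply (c : ℝˣ) (f : 𝓢(E, F)) (x : E) :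
    schwartzDilate c f x = f ((c : ℝ) • x) := rfl

theorem lineDerivOp_schwartzDilate (m : E) (c : ℝˣ) (f : 𝓢(E, F)) :
    ∂_{m} (schwartzDilate c f) = (c : ℝ) • schwartzDilate c (∂_{m} f) := by
  rw [schwartzDilate, lineDerivOp_compCLMOfContinuousLinearEquiv]
  ext x
  simp [schwartzDilate_apply, lineDerivOp_apply_eq_fderiv, Units.smul_def]

theorem hasCompactSupport_schwartzDilate (c : ℝˣ) {f : 𝓢(E, F)} (hf : HasCompactSupport f) :
    HasCompactSupport (schwartzDilate c f) :=
  hf.comp_homeomorph (Homeomorph.smul c)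

end Product

variable [InnerProductSpace ℝ E] [FiniteDimensional ℝ E]

theorem laplacian_schwartzDilate (c : ℝˣ) (f : 𝓢(E, F)) :
    Δ (schwartzDilate c f) = (c : ℝ) ^ 2 • schwartzDilate c (Δ f) := by
  ext x
  simp only [laplacian_eq_sum (stdOrthonormalBasis ℝ E), lineDerivOp_schwartzDilate,
    LineDeriv.lineDerivOp_smul, schwartzDilate_apply, _root_.sum_apply, _root_.smul_apply,
    Finset.smul_sum, smul_smul, sq]

theorem laplacian_schwartzSMul {ι : Type*} [Fintype ι] (b : OrthonormalBasis ι ℝ E)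
    (χ : 𝓢(E, ℝ)) (f : 𝓢(E, F)) :
    Δ (schwartzSMul χ f) = schwartzSMul χ (Δ f) + (schwartzSMul (Δ χ) f +
      (2 : ℝ) • ∑ i, schwartzSMul (∂_{b i} χ) (∂_{b i} f)) := by
  ext x
  simp only [laplacian_eq_sum b, lineDerivOp_schwartzSMul, LineDeriv.lineDerivOp_add,
    schwartzSMul_apply, _root_.sum_apply, _root_.add_apply, _root_.smul_apply, Finset.sum_smul,
    Finset.smul_sum, ← Finset.sum_add_distrib]
  exact Finset.sum_congr rfl fun i _ => by module

variable [MeasurableSpace E] [BorelSpace E]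

section toLp

variable {p : ℝ≥0∞} {μ : Measure E} [μ.HasTemperateGrowth]

theorem toLp_add (f g : 𝓢(E, F)) : (f + g).toLp p μ = f.toLp p μ + g.toLp p μ := rfl

theorem toLp_sub (f g : 𝓢(E, F)) : (f - g).toLp p μ = f.toLp p μ - g.toLp p μ := rfl

theorem toLp_smul {𝕜 : Type*} [RCLike 𝕜] [NormedSpace 𝕜 F] (c : 𝕜) (f : 𝓢(E, F)) :
    (c • f).toLp p μ = c • f.toLp p μ := rfl

theorem toLp_sum [Fact (1 ≤ p)] {ι : Type*} (s : Finset ι) (f : ι → 𝓢(E, F)) :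
    (∑ i ∈ s, f i).toLp p μ = ∑ i ∈ s, (f i).toLp p μ :=
  map_sum (toLpCLM ℝ F p μ) f s

end toLp

theorem norm_toLp_schwartzSMul_le {p : ℝ≥0∞} {C : ℝ} {χ : 𝓢(E, ℝ)} (hχ : ∀ x, ‖χ x‖ ≤ C)
    (f : 𝓢(E, F)) : ‖(schwartzSMul χ f).toLp p‖ ≤ C * ‖f.toLp p‖ := by
  refine Lp.norm_le_mul_norm_of_ae_le_mul ?_
  filter_upwards [(schwartzSMul χ f).coeFn_toLp p, f.coeFn_toLp p] with x h₁ h₂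
  rw [h₁, h₂, schwartzSMul_apply, norm_smul]
  exact mul_le_mul_of_nonneg_right (hχ x) (norm_nonneg _)

theorem tendsto_toLp_schwartzSMul_dilate {ι : Type*} {l : Filter ι} [l.IsCountablyGenerated]
    {p : ℝ≥0∞} [Fact (1 ≤ p)] (hp : p ≠ ⊤) {c : ι → ℝˣ} (hc : Tendsto (fun n => (c n : ℝ)) l (𝓝 0))
    {χ : 𝓢(E, ℝ)} (hχ : χ 0 = 1) (f : 𝓢(E, F)) :
    Tendsto (fun n => (schwartzSMul (schwartzDilate (c n) χ) f).toLp p) l (𝓝 (f.toLp p)) := by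
  obtain ⟨C, hC⟩ : ∃ C, ∀ x, ‖χ x‖ ≤ C := ⟨_, χ.norm_le_seminorm ℝ⟩
  refine (Lp.tendsto_Lp_iff_tendsto_eLpNorm'' _
      (fun n => (schwartzSMul (schwartzDilate (c n) χ) f).memLp p) _
    (f.memLp p)).2 <|
    tendsto_eLpNorm_zero_of_dominated (l := l) hp
      (fun n => ((schwartzSMul (schwartzDilate (c n) χ) f).memLp p).sub (f.memLp p))
      ((f.memLp p).norm.const_mul (C + 1)) (.of_forall fun n x => ?_) fun x => ?_
  · simp only [Pi.sub_apply, schwartzSMul_apply, schwartzDilate_apply]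
    refine (norm_sub_le _ _).trans ?_
    rw [norm_smul, add_one_mul]
    gcongr
    exact hC _
  · have h_one : Tendsto (fun n => χ ((c n : ℝ) • x)) l (𝓝 1) := by
      rw [← hχ]
      refine (χ.continuous.tendsto 0).comp ?_
      simpa using hc.smul_const x
    simpa [schwartzSMul_apply, schwartzDilate_apply] using
      ((h_one.smul_const (f x)).sub_const (f x))

theorem norm_toLp_laplacian_commutator_le {ι : Type*} [Fintype ι] (b : OrthonormalBasis ι ℝ E)
    {p : ℝ≥0∞} [Fact (1 ≤ p)] {C : ℝ} {χ : 𝓢(E, ℝ)} (hχ : ∀ x, ‖Δ χ x‖ ≤ C)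
    (hχ' : ∀ i x, ‖∂_{b i} χ x‖ ≤ C) (f : 𝓢(E, F)) :
    ‖(Δ (schwartzSMul χ f) - schwartzSMul χ (Δ f)).toLp p‖ ≤
      C * (‖f.toLp p‖ + 2 * ∑ i, ‖(∂_{b i} f).toLp p‖) := by
  have h_sum : ‖∑ i, (schwartzSMul (∂_{b i} χ) (∂_{b i} f)).toLp p‖ ≤
      ∑ i, C * ‖(∂_{b i} f).toLp p‖ :=
    norm_sum_le_of_le _ fun i _ => norm_toLp_schwartzSMul_le (hχ' i) _
  rw [laplacian_schwartzSMul b, add_sub_cancel_left, toLp_add, toLp_smul, toLp_sum]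
  refine (norm_add_le_of_le (norm_toLp_schwartzSMul_le hχ f) (norm_smul_le _ _)).trans ?_
  rw [Real.norm_two]
  refine (add_le_add_right (mul_le_mul_of_nonneg_left h_sum zero_le_two) _).trans_eq ?_
  rw [← Finset.mul_sum]
  ring

end Cutoff

section Solutions

open Complex (I)

variable {E : Type*} [NormedAddCommGroup E] [InnerProductSpace ℝ E] [FiniteDimensional ℝ E]

/-- Schwartz solutions of `∂ₜ u = i Δ u`. Time regularity is pointwise in `x`: nothing bounds the
Schwartz seminorms of `u t` locally uniformly in `t`. -/
structure IsFreeSchrodinger (u : ℝ → 𝓢(E, ℂ)) : Prop where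
  hasDerivAt (t : ℝ) (x : E) : HasDerivAt (fun s => u s x) (I * Δ (u t) x) t
  continuous_laplacian : Continuous fun p : ℝ × E => Δ (u p.1) p.2

variable {u : ℝ → 𝓢(E, ℂ)}

theorem IsFreeSchrodinger.continuous_apply (hu : IsFreeSchrodinger u) (x : E) :
    Continuous fun t => u t x :=
  continuous_iff_continuousAt.2 fun t => (hu.hasDerivAt t x).continuousAt

variable (E) in
theorem exists_schwartzMap_hasCompactSupport_apply_zero :
    ∃ χ : 𝓢(E, ℝ), HasCompactSupport χ ∧ χ 0 = 1 := by
  let bump : ContDiffBump (0 : E) := ⟨1, 2, one_pos, one_lt_two⟩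
  exact ⟨bump.hasCompactSupport.toSchwartzMap bump.contDiff, bump.hasCompactSupport,
    bump.one_of_mem_closedBall (Metric.mem_closedBall_self zero_le_one)⟩

variable [MeasurableSpace E] [BorelSpace E]

theorem inner_toLp_schwartzSMul (χ : 𝓢(E, ℝ)) (f g : 𝓢(E, ℂ)) :
    inner ℂ ((schwartzSMul χ f).toLp 2) (g.toLp 2) =
      inner ℂ (f.toLp 2) ((schwartzSMul χ g).toLp 2) := by
  rw [inner_toL2_toL2_eq _ _ volume, inner_toL2_toL2_eq _ _ volume]
  congr 1 with x
  simp only [schwartzSMul_apply, RCLike.inner_apply, Complex.real_smul, map_mul,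
    Complex.conj_ofReal]
  ring

theorem inner_toLp_laplacian (f g : 𝓢(E, ℂ)) :
    inner ℂ ((Δ f).toLp 2) (g.toLp 2) = inner ℂ (f.toLp 2) ((Δ g).toLp 2) := by
  rw [← inner_fourier_toL2_eq, ← inner_fourier_toL2_eq f, inner_toL2_toL2_eq _ _ volume,
    inner_toL2_toL2_eq _ _ volume]
  congr 1 with ξ
  simp only [fourier_laplacian_apply, RCLike.inner_apply, map_mul, map_neg, Complex.conj_ofReal]
  ring

theorem IsFreeSchrodinger.hasDerivAt_toLp_schwartzSMul (hu : IsFreeSchrodinger u) {χ : 𝓢(E, ℝ)}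
    (hχ : HasCompactSupport χ) (t : ℝ) :
    HasDerivAt (fun s => (schwartzSMul χ (u s)).toLp 2)
      ((schwartzSMul χ (I • Δ (u t))).toLp 2) t := by
  obtain ⟨M, hM⟩ : ∃ M, ∀ p ∈ Metric.closedBall t 1 ×ˢ tsupport χ, ‖Δ (u p.1) p.2‖ ≤ M :=
    ((isCompact_closedBall t 1).prod hχ).exists_bound_of_continuousOn
      hu.continuous_laplacian.continuousOn
  refine hasDerivAt_toLp_of_dominated (w' := fun s => schwartzSMul χ (I • Δ (u s)))
    (by simp) one_pos (fun s => (schwartzSMul χ (u s)).memLp 2) (SchwartzMap.memLp _ 2)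
    ((χ.memLp 2).norm.const_mul M) (fun s hs x => ?_) fun s _ x => ?_
  · rw [schwartzSMul_apply, norm_smul, _root_.smul_apply, norm_smul, Complex.norm_I, one_mul,
      mul_comm]
    by_cases hx : x ∈ tsupport χ
    · gcongr
      exact hM (s, x) ⟨Metric.ball_subset_closedBall hs, hx⟩
    · simp [image_eq_zero_of_notMem_tsupport hx]
  · simp only [schwartzSMul_apply]
    exact (hu.hasDerivAt s x).const_smul (χ x)

theorem IsFreeSchrodinger.hasDerivAt_inner_freePropagator (hu : IsFreeSchrodinger u)
    {χ : 𝓢(E, ℝ)} (hχ : HasCompactSupport χ) (ψ : 𝓢(E, ℂ)) (t : ℝ) :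
    HasDerivAt
      (fun s => inner ℂ ((freePropagator s ψ).toLp 2) ((schwartzSMul χ (u s)).toLp 2))
      (I * inner ℂ ((Δ (schwartzSMul χ (freePropagator t ψ)) -
        schwartzSMul χ (Δ (freePropagator t ψ))).toLp 2) ((u t).toLp 2)) t := by
  refine ((hasDerivAt_toLp_freePropagator ψ t).inner ℂ
    (hu.hasDerivAt_toLp_schwartzSMul hχ t)).congr_deriv ?_
  rw [toLp_smul, inner_smul_left, ← inner_toLp_schwartzSMul, ← inner_toLp_schwartzSMul,
    toLp_smul, inner_smul_right, ← inner_toLp_laplacian, toLp_sub, inner_sub_left, Complex.conj_I]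
  ring

theorem exists_norm_toLp_laplacian_commutator_dilate_le {ι F : Type*} [Fintype ι]
    [NormedAddCommGroup F] [NormedSpace ℝ F] {p : ℝ≥0∞} [Fact (1 ≤ p)]
    (b : OrthonormalBasis ι ℝ E) (χ : 𝓢(E, ℝ)) :
    ∃ C, ∀ c : ℝˣ, |(c : ℝ)| ≤ 1 → ∀ f : 𝓢(E, F),
      ‖(Δ (schwartzSMul (schwartzDilate c χ) f) -
        schwartzSMul (schwartzDilate c χ) (Δ f)).toLp p‖ ≤
        |(c : ℝ)| * C * (‖f.toLp p‖ + 2 * ∑ i, ‖(∂_{b i} f).toLp p‖) := by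
  let A := SchwartzMap.seminorm ℝ 0 0 (Δ χ)
  let D (i : ι) := SchwartzMap.seminorm ℝ 0 0 (∂_{b i} χ)
  have hA (x : E) : ‖Δ χ x‖ ≤ A + ∑ i, D i :=
    ((Δ χ).norm_le_seminorm ℝ x).trans
      (le_add_of_nonneg_right (Finset.sum_nonneg fun i _ => apply_nonneg _ _))
  have hD (i : ι) (x : E) : ‖∂_{b i} χ x‖ ≤ A + ∑ i, D i :=
    ((∂_{b i} χ).norm_le_seminorm ℝ x).trans <|
      (Finset.single_le_sum (f := D) (fun i _ => apply_nonneg _ _) (Finset.mem_univ i)).trans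
        (le_add_of_nonneg_left (apply_nonneg _ _))
  refine ⟨A + ∑ i, D i, fun c hc => norm_toLp_laplacian_commutator_le b (fun x => ?_) fun i x => ?_⟩
  · rw [laplacian_schwartzDilate, _root_.smul_apply, norm_smul, norm_pow, Real.norm_eq_abs,
      schwartzDilate_apply]
    exact mul_le_mul (pow_le_of_le_one (abs_nonneg _) hc two_ne_zero) (hA _) (norm_nonneg _)
      (abs_nonneg _)
  · rw [lineDerivOp_schwartzDilate, _root_.smul_apply, norm_smul, Real.norm_eq_abs,
      schwartzDilate_apply]
    gcongr
    exact hD i _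

theorem IsFreeSchrodinger.norm_inner_freePropagator_sub_le (hu : IsFreeSchrodinger u) {J : Set ℝ}
    (hJ : Convex ℝ J) {N K : ℝ} (hN : ∀ r ∈ J, ‖(u r).toLp 2‖ ≤ N) {χ : 𝓢(E, ℝ)}
    (hχ : HasCompactSupport χ) {ψ : 𝓢(E, ℂ)}
    (hK : ∀ r, ‖(Δ (schwartzSMul χ (freePropagator r ψ)) -
      schwartzSMul χ (Δ (freePropagator r ψ))).toLp 2‖ ≤ K) {s t : ℝ} (hs : s ∈ J) (ht : t ∈ J) :
    ‖(inner ℂ ((freePropagator t ψ).toLp 2) ((schwartzSMul χ (u t)).toLp 2) -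
      inner ℂ ((freePropagator s ψ).toLp 2) ((schwartzSMul χ (u s)).toLp 2) : ℂ)‖ ≤
        K * N * ‖t - s‖ := by
  refine hJ.norm_image_sub_le_of_norm_hasDerivWithin_le
    (fun r _ => (hu.hasDerivAt_inner_freePropagator hχ ψ r).hasDerivWithinAt) (fun r hr => ?_)
    hs ht
  rw [norm_mul, Complex.norm_I, one_mul]
  exact (norm_inner_le_norm _ _).trans
    (mul_le_mul (hK r) (hN r hr) (norm_nonneg _) ((norm_nonneg _).trans (hK r)))

theorem IsFreeSchrodinger.inner_freePropagator_eq_of_bounded (hu : IsFreeSchrodinger u)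
    {J : Set ℝ} (hJ : Convex ℝ J) {N : ℝ} (hN : ∀ r ∈ J, ‖(u r).toLp 2‖ ≤ N) (ψ : 𝓢(E, ℂ))
    {s t : ℝ} (hs : s ∈ J) (ht : t ∈ J) :
    inner ℂ ((freePropagator t ψ).toLp 2) ((u t).toLp 2) =
      inner ℂ ((freePropagator s ψ).toLp 2) ((u s).toLp 2) := by
  let b := stdOrthonormalBasis ℝ E
  obtain ⟨χ, hχ, hχ0⟩ := exists_schwartzMap_hasCompactSupport_apply_zero E
  obtain ⟨C, hC⟩ := exists_norm_toLp_laplacian_commutator_dilate_le (F := ℂ) (p := 2) b χ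
  let c (n : ℕ) : ℝˣ := (Units.mk0 ((n : ℝ) + 1) (by positivity))⁻¹
  have hc_tendsto : Tendsto (fun n => (c n : ℝ)) atTop (𝓝 0) := by
    simpa [c] using tendsto_one_div_add_atTop_nhds_zero_nat (𝕜 := ℝ)
  have hc_le (n : ℕ) : |(c n : ℝ)| ≤ 1 := by
    simpa [c, abs_inv] using inv_le_one_of_one_le₀ (by simp [abs_of_nonneg, add_nonneg])
  set K := ‖ψ.toLp 2‖ + 2 * ∑ i, ‖(∂_{b i} ψ).toLp 2‖
  have h_le (n : ℕ) := hu.norm_inner_freePropagator_sub_le hJ hN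
    (hasCompactSupport_schwartzDilate (c n) hχ) (ψ := ψ) (K := |(c n : ℝ)| * C * K) (fun r => by
      simpa only [lineDerivOp_freePropagator, norm_toLp_freePropagator] using
        hC (c n) (hc_le n) (freePropagator r ψ)) hs ht
  have h_lim (r : ℝ) := (tendsto_const_nhds (x := (freePropagator r ψ).toLp 2)).inner (𝕜 := ℂ)
    (tendsto_toLp_schwartzSMul_dilate (p := 2) (by simp) hc_tendsto hχ0 (u r))
  have h_bound : Tendsto (fun n => |(c n : ℝ)| * C * K * N * ‖t - s‖) atTop (𝓝 0) := by
    simpa using ((((hc_tendsto.abs.mul_const C).mul_const K).mul_const N).mul_const ‖t - s‖)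
  rw [← sub_eq_zero, ← norm_le_zero_iff]
  exact le_of_tendsto_of_tendsto' ((h_lim t).sub (h_lim s)).norm h_bound h_le

theorem IsFreeSchrodinger.freePropagator_neg_eq_of_bounded (hu : IsFreeSchrodinger u)
    {J : Set ℝ} (hJ : Convex ℝ J) {N : ℝ} (hN : ∀ r ∈ J, ‖(u r).toLp 2‖ ≤ N)
    {s t : ℝ} (hs : s ∈ J) (ht : t ∈ J) :
    freePropagator (-t) (u t) = freePropagator (-s) (u s) := by
  set ψ := freePropagator (-t) (u t) - freePropagator (-s) (u s) with hψ
  have h_pull (r : ℝ) : inner ℂ ((freePropagator r ψ).toLp 2) ((u r).toLp 2) =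
      inner ℂ (ψ.toLp 2) ((freePropagator (-r) (u r)).toLp 2) := by
    rw [← inner_toLp_freePropagator (-r), freePropagator_neg_apply_self]
  have h_zero : inner ℂ (ψ.toLp 2) (ψ.toLp 2) = 0 := by
    conv_lhs => rw [hψ, toLp_sub, inner_sub_right, ← toLp_sub, ← hψ]
    rw [← h_pull, ← h_pull, hu.inner_freePropagator_eq_of_bounded hJ hN ψ hs ht, sub_self]
  have h_eq : ψ.toLp 2 = (0 : 𝓢(E, ℂ)).toLp 2 := inner_self_eq_zero.1 h_zero
  exact sub_eq_zero.1 (injective_toLp 2 volume h_eq)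

theorem IsFreeSchrodinger.isClosed_setOf_freePropagator_neg_eq (hu : IsFreeSchrodinger u)
    (a : 𝓢(E, ℂ)) : IsClosed ((fun t => freePropagator (-t) (u t)) ⁻¹' {a}) := by
  have h_eq : (fun t => freePropagator (-t) (u t)) ⁻¹' {a} =
      ⋂ x, {t | u t x = freePropagator t a x} := by
    ext t
    rw [Set.mem_preimage, Set.mem_singleton_iff, Set.mem_iInter]
    constructor
    · rintro rfl x
      rw [Set.mem_ofPred_eq, freePropagator_freePropagator, add_neg_cancel, freePropagator_zero]
    · intro h
      rw [SchwartzMap.ext h, freePropagator_neg_apply_self]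
  rw [h_eq]
  exact isClosed_iInter fun x =>
    isClosed_eq (hu.continuous_apply x) (continuous_freePropagator_apply a x)

theorem IsFreeSchrodinger.isClosed_setOf_norm_toLp_le (hu : IsFreeSchrodinger u) (N : ℝ) :
    IsClosed {t | ‖(u t).toLp 2‖ ≤ N} := by
  rcases lt_or_ge N 0 with hN | hN
  · simp [(hN.trans_le (norm_nonneg _)).not_ge]
  simp only [norm_toLp, ← ENNReal.le_ofReal_iff_toReal_le ((u _).memLp 2).eLpNorm_ne_top hN]
  exact isClosed_setOf_eLpNorm_le (fun t => (u t).continuous.aestronglyMeasurable)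
    hu.continuous_apply _

theorem IsFreeSchrodinger.eq_freePropagator (hu : IsFreeSchrodinger u) (t : ℝ) :
    u t = freePropagator t (u 0) := by
  let C (n : ℕ) : Set 𝓢(E, ℂ) := {f | ‖f.toLp 2‖ ≤ n}
  have h_mem (n : ℕ) (r : ℝ) : freePropagator (-r) (u r) ∈ C n ↔ ‖(u r).toLp 2‖ ≤ n := by
    rw [Set.mem_ofPred_eq, norm_toLp_freePropagator]
  have h_closed (n : ℕ) : IsClosed ((fun r => freePropagator (-r) (u r)) ⁻¹' C n) := by
    simpa only [Set.preimage, h_mem] using hu.isClosed_setOf_norm_toLp_le n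
  have h_iUnion : ⋃ n, C n = Set.univ :=
    Set.iUnion_eq_univ_iff.2 fun f => exists_nat_ge ‖f.toLp 2 volume‖
  have h_const : IsLocallyConstant fun r => freePropagator (-r) (u r) :=
    isLocallyConstant_of_iUnion_eq_univ hu.isClosed_setOf_freePropagator_neg_eq h_closed h_iUnion
      fun n _ _ hJ hJn _ hr _ hs => hu.freePropagator_neg_eq_of_bounded hJ.ordConnected.convex
        (fun q hq => (h_mem n q).1 (hJn hq)) hs hr
  have h_init := h_const.apply_eq_of_preconnectedSpace t 0
  rw [neg_zero, freePropagator_zero] at h_init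
  rw [← h_init, freePropagator_freePropagator, add_neg_cancel, freePropagator_zero]

end Solutions

section MassDensity

section WeightedNorm

variable {α F : Type*} [MeasurableSpace α] {μ : Measure α} [NormedAddCommGroup F]
  [InnerProductSpace ℝ F]

theorem hasDerivAt_integral_mul_norm_sq_Lp {w : α → ℝ} (hw : MemLp w ⊤ μ) {f : ℝ → Lp F 2 μ}
    {f' : Lp F 2 μ} {t : ℝ} (hf : HasDerivAt f f' t) :
    HasDerivAt (fun s => ∫ x, w x * ‖f s x‖ ^ 2 ∂μ) (2 * ∫ x, w x * ⟪f t x, f' x⟫ ∂μ) t := by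
  let W : Lp F 2 μ →L[ℝ] Lp F 2 μ := (ContinuousLinearMap.lsmul ℝ ℝ).holderL μ ⊤ 2 2 hw.toLp
  have hW (g h : Lp F 2 μ) : ⟪g, W h⟫ = ∫ x, w x * ⟪g x, h x⟫ ∂μ := by
    rw [L2.inner_def]
    refine integral_congr_ae ?_
    filter_upwards [(ContinuousLinearMap.lsmul ℝ ℝ).coeFn_holder (r := 2) hw.toLp h, hw.coeFn_toLp]
      with x h_smul h_w
    have h_apply : W h x = w x • h x := h_w ▸ h_smul
    rw [h_apply, inner_smul_right]
  have h_mass (s : ℝ) : ∫ x, w x * ‖f s x‖ ^ 2 ∂μ = ⟪f s, W (f s)⟫ := by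
    simp only [hW, real_inner_self_eq_norm_sq]
  simp only [h_mass]
  refine (hf.inner ℝ (W.hasFDerivAt.comp_hasDerivAt t hf)).congr_deriv ?_
  simp only [Function.comp_apply, hW, real_inner_comm (f t _) (f' _), two_mul]

end WeightedNorm

section MomentumDensity

open Complex (I)

variable {E : Type*} [NormedAddCommGroup E] [NormedSpace ℝ E]

/-- The component `Im (f̄ ∂ₘ f)` of the momentum density, encoded by the real inner product of `ℂ`
as `⟪i f, ∂ₘ f⟫`. -/
def momentumDensity (m : E) (f : 𝓢(E, ℂ)) : 𝓢(E, ℝ) :=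
  pairing (innerSL ℝ) (I • f) (∂_{m} f)

theorem momentumDensity_apply (m : E) (f : 𝓢(E, ℂ)) (x : E) :
    momentumDensity m f x = (starRingEnd ℂ (f x) * ∂_{m} f x).im := by
  rw [momentumDensity, pairing_apply_apply, innerSL_apply_apply ℝ, Complex.inner]
  simp only [_root_.smul_apply, smul_eq_mul, map_mul, Complex.conj_I, neg_mul, Complex.neg_re,
    Complex.neg_im, Complex.mul_re, Complex.mul_im, Complex.I_re, Complex.I_im, Complex.conj_re,
    Complex.conj_im]
  ring

theorem lineDerivOp_momentumDensity_apply (m : E) (f : 𝓢(E, ℂ)) (x : E) :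
    ∂_{m} (momentumDensity m f) x = ⟪I * f x, ∂_{m} (∂_{m} f) x⟫ := by
  have h_orth (z : ℂ) : ⟪I * z, z⟫ = 0 := by
    rw [Complex.inner]
    simp only [map_mul, Complex.conj_I, neg_mul, Complex.neg_re, Complex.neg_im, Complex.mul_re,
      Complex.mul_im, Complex.I_re, Complex.I_im, Complex.conj_re, Complex.conj_im]
    ring
  rw [momentumDensity, lineDerivOp_pairing, LineDeriv.lineDerivOp_smul, _root_.add_apply,
    pairing_apply_apply, pairing_apply_apply, innerSL_apply_apply ℝ, innerSL_apply_apply ℝ,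
    _root_.smul_apply, smul_eq_mul, h_orth, zero_add, _root_.smul_apply, smul_eq_mul]

theorem sum_lineDerivOp_momentumDensity_apply {ι E : Type*} [Fintype ι] [NormedAddCommGroup E]
    [InnerProductSpace ℝ E] [FiniteDimensional ℝ E] (b : OrthonormalBasis ι ℝ E) (f : 𝓢(E, ℂ))
    (x : E) :
    ∑ i, ∂_{b i} (momentumDensity (b i) f) x = ⟪I * f x, Δ f x⟫ := by
  simp only [lineDerivOp_momentumDensity_apply, laplacian_eq_sum b, _root_.sum_apply, inner_sum]

end MomentumDensity

section WeightedMass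

open Complex (I)

variable {E : Type*} [NormedAddCommGroup E] [MeasurableSpace E] [BorelSpace E]

theorem integral_mul_lineDerivOp_eq_neg_fderiv_mul [NormedSpace ℝ E] [FiniteDimensional ℝ E]
    {μ : Measure E} [μ.IsAddHaarMeasure] {w : E → ℝ} {m : E} (hw : Differentiable ℝ w)
    (hw_bdd : MemLp w ⊤ μ) (hw_bdd' : MemLp (fun x => fderiv ℝ w x m) ⊤ μ) (f : 𝓢(E, ℝ)) :
    ∫ x, w x * ∂_{m} f x ∂μ = -∫ x, fderiv ℝ w x m * f x ∂μ := by
  simp only [lineDerivOp_apply_eq_fderiv]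
  exact integral_mul_fderiv_eq_neg_fderiv_mul_of_integrable (f.integrable.mul_of_top_right hw_bdd')
    ((∂_{m} f).integrable.mul_of_top_right hw_bdd) (f.integrable.mul_of_top_right hw_bdd)
    (fun x _ => hw x) fun x _ => f.differentiableAt

theorem memLp_top_fderiv_apply [NormedSpace ℝ E] {F : Type*} [NormedAddCommGroup F]
    [NormedSpace ℝ F] [CompleteSpace F] [SecondCountableTopology F] {μ : Measure E} {w : E → F}
    (hw : ∃ C, ∀ x, ‖fderiv ℝ w x‖ ≤ C) (m : E) : MemLp (fun x => fderiv ℝ w x m) ⊤ μ := by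
  borelize F
  obtain ⟨C, hC⟩ := hw
  exact memLp_top_of_bound (measurable_fderiv_apply_const ℝ w m).aestronglyMeasurable (C * ‖m‖)
    (ae_of_all _ fun x => (fderiv ℝ w x).le_of_opNorm_le (hC x) m)

theorem im_integral_conj_mul_sum_lineDerivOp [NormedSpace ℝ E] [SecondCountableTopology E]
    {μ : Measure E} [μ.HasTemperateGrowth] {ι : Type*} [Fintype ι] {m : ι → E} {w : ι → E → ℝ}
    (f : 𝓢(E, ℂ)) (hw : ∀ i, MemLp (w i) ⊤ μ) :
    (∫ x, starRingEnd ℂ (f x) * ∑ i, (w i x : ℂ) * ∂_{m i} f x ∂μ).im =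
      ∑ i, ∫ x, w i x * momentumDensity (m i) f x ∂μ := by
  have h_int (i : ι) : Integrable (fun x => (w i x : ℂ) * (starRingEnd ℂ (f x) * ∂_{m i} f x)) μ :=
    (pairing ((ContinuousLinearMap.mul ℝ ℂ).comp (Complex.conjCLE : ℂ →L[ℝ] ℂ)) f
      (∂_{m i} f)).integrable.mul_of_top_right (hw i).ofReal
  simp only [Finset.mul_sum, mul_left_comm (starRingEnd ℂ _)]
  rw [integral_finsetSum _ fun i _ => h_int i, Complex.im_sum]
  refine Finset.sum_congr rfl fun i _ => (integral_im (h_int i)).symm.trans ?_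
  simp only [momentumDensity_apply, RCLike.im_eq_complex_im, Complex.im_ofReal_mul]

variable [InnerProductSpace ℝ E] [FiniteDimensional ℝ E] {u : ℝ → 𝓢(E, ℂ)}

theorem IsFreeSchrodinger.hasDerivAt_toLp (hu : IsFreeSchrodinger u) (t : ℝ) :
    HasDerivAt (fun s => (u s).toLp 2) ((I • Δ (u t)).toLp 2) t := by
  simpa only [← hu.eq_freePropagator] using hasDerivAt_toLp_freePropagator (u 0) t

theorem IsFreeSchrodinger.hasDerivAt_integral_mul_norm_sq {ι : Type*} [Fintype ι]
    (b : OrthonormalBasis ι ℝ E) (hu : IsFreeSchrodinger u) {w : E → ℝ}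
    (hw : Differentiable ℝ w) (hw_bdd : MemLp w ⊤ volume)
    (hw_bdd' : ∀ i, MemLp (fun x => fderiv ℝ w x (b i)) ⊤ volume) (t : ℝ) :
    HasDerivAt (fun s => ∫ x, w x * ‖u s x‖ ^ 2)
      (2 * ∑ i, ∫ x, fderiv ℝ w x (b i) * momentumDensity (b i) (u t) x) t := by
  have h_mass (s : ℝ) : ∫ x, w x * ‖(u s).toLp 2 volume x‖ ^ 2 = ∫ x, w x * ‖u s x‖ ^ 2 :=
    integral_congr_ae <| ((u s).coeFn_toLp 2 volume).mono fun x hx => by simp only [hx]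
  have h_flux : ∫ x, w x * ⟪(u t).toLp 2 volume x, (I • Δ (u t)).toLp 2 volume x⟫ =
      ∫ x, -∑ i, w x * ∂_{b i} (momentumDensity (b i) (u t)) x := by
    refine integral_congr_ae ?_
    filter_upwards [(u t).coeFn_toLp 2 volume, (I • Δ (u t)).coeFn_toLp 2 volume] with x h h'
    rw [h, h', ← Finset.mul_sum, sum_lineDerivOp_momentumDensity_apply, Complex.inner,
      Complex.inner]
    simp only [_root_.smul_apply, smul_eq_mul, map_mul, Complex.conj_I, neg_mul, Complex.neg_re,
      Complex.neg_im, Complex.mul_re, Complex.mul_im, Complex.I_re, Complex.I_im, Complex.conj_re,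
      Complex.conj_im]
    ring
  have h := hasDerivAt_integral_mul_norm_sq_Lp hw_bdd (hu.hasDerivAt_toLp t)
  simp only [h_mass] at h
  rw [h_flux, integral_neg, integral_finsetSum _ fun i _ =>
    (∂_{b i} (momentumDensity (b i) (u t))).integrable.mul_of_top_right hw_bdd] at h
  refine h.congr_deriv ?_
  simp only [integral_mul_lineDerivOp_eq_neg_fderiv_mul hw hw_bdd (hw_bdd' _),
    Finset.sum_neg_distrib, neg_neg]

theorem localized_mass_deriv_linear_general {ι : Type*} [Fintype ι]
    (b : OrthonormalBasis ι ℝ E) (hu : IsFreeSchrodinger u) {φ : E → ℝ}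
    (hφ : Differentiable ℝ φ) (hφbdd : ∃ C, ∀ x, |φ x| ≤ C)
    (hφgrad : ∃ C, ∀ x, ‖fderiv ℝ φ x‖ ≤ C) (t : ℝ) :
    HasDerivAt (fun s : ℝ => ∫ x, φ x ^ 2 * ‖u s x‖ ^ 2)
      (4 * (∫ x, (φ x : ℂ) * (starRingEnd ℂ) (u t x) *
        ∑ i, ((fderiv ℝ φ x (b i) : ℝ) : ℂ) * ∂_{b i} (u t) x).im) t := by
  have h_bdd : MemLp φ ⊤ :=
    hφbdd.elim fun C hC => memLp_top_of_bound hφ.continuous.aestronglyMeasurable C (ae_of_all _ hC)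
  have h_bdd_mul (m : E) : MemLp (fun x => φ x * fderiv ℝ φ x m) ⊤ :=
    (memLp_top_fderiv_apply hφgrad m).mul' h_bdd
  have h_fderiv (x m : E) : fderiv ℝ (φ ^ 2) x m = 2 * (φ x * fderiv ℝ φ x m) := by
    simp [fderiv_pow, hφ x, mul_assoc]
  have h_mass := hu.hasDerivAt_integral_mul_norm_sq b (w := φ ^ 2) (hφ.pow 2)
    (by simpa only [sq] using h_bdd.mul h_bdd)
    (fun i => by simpa only [h_fderiv] using (h_bdd_mul (b i)).const_mul 2) t
  refine h_mass.congr_deriv ?_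
  simp only [h_fderiv, mul_assoc (2 : ℝ), integral_const_mul, ← Finset.mul_sum]
  rw [← im_integral_conj_mul_sum_lineDerivOp (u t) fun i => h_bdd_mul (b i), ← mul_assoc]
  norm_num only [mul_comm (φ _ : ℂ), Complex.ofReal_mul, mul_assoc, Finset.mul_sum]

end WeightedMass

end MassDensity

section Euclidean

variable {d : ℕ}

theorem pd_schwartzMap (f : 𝓢(Ed d, ℂ)) (i : Fin d) : pd f i = ∂_{stdBasis i} f := by
  ext x
  rw [pd, lineDerivOp_apply_eq_fderiv]

theorem lap_schwartzMap (f : 𝓢(Ed d, ℂ)) : lap f = Δ f := by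
  ext x
  simp only [lap, pd_schwartzMap, laplacian_eq_sum (EuclideanSpace.basisFun (Fin d) ℝ),
    _root_.sum_apply, EuclideanSpace.basisFun_apply, stdBasis]

theorem IsLinSchrodSol.isFreeSchrodinger {u : ℝ → 𝓢(Ed d, ℂ)} (hu : IsLinSchrodSol d u) :
    IsFreeSchrodinger u := by
  obtain ⟨h_smooth, h_eq⟩ := hu
  have h_path (t : ℝ) (x : Ed d) : HasDerivAt (fun s => u s x)
      (fderiv ℝ (fun p : ℝ × Ed d => u p.1 p.2) (t, x) (1, 0)) t :=
    HasFDerivAt.comp_hasDerivAt (f := fun s => (s, x)) t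
      (h_smooth.differentiable (by simp) (t, x)).hasFDerivAt
      ((hasDerivAt_id t).prodMk (hasDerivAt_const t x))
  have h_time (t : ℝ) (x : Ed d) : HasDerivAt (fun s => u s x) (Complex.I * Δ (u t) x) t := by
    rw [← lap_schwartzMap, ← h_eq]
    exact (h_path t x).differentiableAt.hasDerivAt
  refine ⟨h_time, ?_⟩
  have h_lap (p : ℝ × Ed d) : Δ (u p.1) p.2 =
      -Complex.I * fderiv ℝ (fun p : ℝ × Ed d => u p.1 p.2) p (1, 0) := by
    rw [← (h_time p.1 p.2).unique (h_path p.1 p.2), ← mul_assoc, neg_mul, Complex.I_mul_I, neg_neg,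
      one_mul]
  simp only [h_lap]
  exact continuous_const.mul
    ((h_smooth.continuous_fderiv (by simp)).clm_apply continuous_const)

end Euclidean

/-- For a Schwartz solution of the linear Schrödinger equation and a bounded
`C¹` function `φ` with bounded gradient, the localized mass `∫ φ² |u(t)|²` is differentiable
in `t` with derivative `4 Im ∫ φ ū (∇φ · ∇u)`. -/
theorem localized_mass_deriv_linear
    {d : ℕ} (hd : 1 ≤ d) (u : ℝ → SchwartzMap (Ed d) ℂ)
    (hu : IsLinSchrodSol d u)
    (φ : Ed d → ℝ) (hφ : ContDiff ℝ 1 φ)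
    (hφbdd : ∃ C, ∀ x, |φ x| ≤ C)
    (hφgrad : ∃ C, ∀ x, ‖fderiv ℝ φ x‖ ≤ C)
    (t : ℝ) :
    HasDerivAt (fun s : ℝ => ∫ x, φ x ^ 2 * ‖u s x‖ ^ 2)
      (4 * (∫ x, (φ x : ℂ) * (starRingEnd ℂ) (u t x) *
        ∑ i, ((fderiv ℝ φ x (stdBasis i) : ℝ) : ℂ) * pd (⇑(u t)) i x).im) t := by
  simpa only [pd_schwartzMap, EuclideanSpace.basisFun_apply, stdBasis] using
    localized_mass_deriv_linear_general (EuclideanSpace.basisFun (Fin d) ℝ) hu.isFreeSchrodinger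
      (hφ.differentiable one_ne_zero) hφbdd hφgrad t
end
end

section
/- Let d ≥ 1 and let u : ℝ → 𝒮(ℝ^d; ℂ) be a Schwartz solution of the linear Schrödinger equation. Let A, B ⊆ ℝ^d be nonempty sets with dist(A,B) > 0. Then for every t ≥ 0, ‖u(t)‖_{L²(B)} ≤ (2 t ‖∇u(0)‖_{L²(ℝ^d)}) / dist(A,B) + ‖u(0)‖_{L²(ℝ^d ∖ A)}. -/
open MeasureTheory Filter
open scoped RealInnerProductSpace

noncomputable section

/-!
For a compactly supported cutoff `ψ`, the local conservation law `∂ₜ|u|² = -2 ∇·Im(ū ∇u)` and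
the Cauchy–Schwarz inequality bound the derivative of `‖ψ u(t)‖_{L²}` by
`2 ‖∇ψ‖_∞ ‖∇u(t)‖_{L²}`. A cutoff equal to `1` on `B`, vanishing at distance `δ` from `B` and with
slope close to `1 / δ` gives the disturbance estimate on every time interval where
`‖∇u(t)‖_{L²}` is bounded.

It remains to see that `‖∇u(t)‖_{L²}` is constant. On intervals where it is bounded, letting
`δ → ∞` yields conservation of mass for `u` and likewise for its translated differences; dividing
by the step of the translation turns this into conservation of `‖∇u(t)‖_{L²}`. Joint smoothness
alone gives no uniformity in time of the decay in space, so boundedness is not clear a priori. But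
by Fatou's lemma `t ↦ ‖∇u(t)‖²_{L²}` is lower semicontinuous, hence bounded on some relatively open
piece of any nonempty closed set of times. Applied to the set of times near which it is unbounded,
this shows that the set is empty.
-/

open Set Topology Metric
open scoped ContDiff Convolution SchwartzMap LineDeriv

section Baire

theorem bddAbove_image_of_isCompact {X α : Type*} [TopologicalSpace X] [Preorder α] [Nonempty α]
    [IsDirectedOrder α] {N : X → α} {K : Set X} (hK : IsCompact K)
    (hN : ∀ x ∈ K, (𝓝 x).IsBoundedUnder (· ≤ ·) N) : BddAbove (N '' K) := by
  refine hK.induction_on (p := fun s => BddAbove (N '' s)) (by simp)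
    (fun _ _ hst ht => ht.mono (image_mono hst))
    (fun _ _ hs ht => by simpa only [image_union] using hs.union ht) fun x hx => ?_
  obtain ⟨M, hM⟩ := hN x hx
  exact ⟨_, mem_nhdsWithin_of_mem_nhds hM, M, forall_mem_image.2 fun _ hy => hy⟩

theorem isClosed_setOf_not_isBoundedUnder_nhds {X α : Type*} [TopologicalSpace X]
    (r : α → α → Prop) (N : X → α) : IsClosed {x | ¬ (𝓝 x).IsBoundedUnder r N} := by
  refine isOpen_compl_iff.1 (isOpen_iff_eventually.2 fun x hx => ?_)
  obtain ⟨M, hM⟩ := not_not.1 hx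
  filter_upwards [eventually_eventually_nhds.2 hM] with y hy using not_not.2 ⟨M, hy⟩

theorem exists_isOpen_bddAbove_image_of_lowerSemicontinuous {X : Type*} [TopologicalSpace X]
    [BaireSpace X] [Nonempty X] {N : X → ℝ} (hN : LowerSemicontinuous N) :
    ∃ U, IsOpen U ∧ U.Nonempty ∧ BddAbove (N '' U) := by
  obtain ⟨n, hn⟩ := nonempty_interior_of_iUnion_of_closed
    (f := fun n : ℕ => N ⁻¹' Iic (n : ℝ)) (fun n => hN.isClosed_preimage n)
    (eq_univ_of_forall fun x => mem_iUnion.2 (exists_nat_ge (N x)))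
  exact ⟨_, isOpen_interior, hn, n, forall_mem_image.2 fun x hx =>
    interior_subset (s := N ⁻¹' Iic (n : ℝ)) hx⟩

theorem exists_mem_uIcc_forall_mem_eq {F : Set ℝ} (hF : IsClosed F) {t : ℝ} (ht : t ∈ F)
    (s : ℝ) : ∃ a ∈ F, a ∈ uIcc t s ∧ ∀ r ∈ uIcc a s, r ∈ F → r = a := by
  obtain ⟨a, ⟨haF, hat⟩, hmin⟩ := (isCompact_uIcc.inter_left hF).exists_isMinOn
    ⟨t, ht, left_mem_uIcc⟩ (f := fun r => |r - s|) (by fun_prop)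
  refine ⟨a, haF, hat, fun r hr hrF => ?_⟩
  have hle : |a - s| ≤ |r - s| := hmin ⟨hrF, uIcc_subset_uIcc_right hat hr⟩
  rcases le_total a s with h | h
  · rw [uIcc_of_le h] at hr
    rw [abs_of_nonpos (by linarith), abs_of_nonpos (by linarith [hr.2])] at hle
    linarith [hr.1]
  · rw [uIcc_of_ge h] at hr
    rw [abs_of_nonneg (by linarith), abs_of_nonneg (by linarith [hr.1])] at hle
    linarith [hr.2]

variable {N : ℝ → ℝ}

theorem exists_mem_uIcc_not_isBoundedUnder_and_eq
    (hloc : ∀ a b, BddAbove (N '' uIcc a b) → N a = N b) {t : ℝ}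
    (ht : ¬ (𝓝 t).IsBoundedUnder (· ≤ ·) N) (s : ℝ) :
    ∃ a ∈ uIcc t s, ¬ (𝓝 a).IsBoundedUnder (· ≤ ·) N ∧ N a = N s := by
  obtain ⟨a, haF, hat, ha⟩ := exists_mem_uIcc_forall_mem_eq
    (isClosed_setOf_not_isBoundedUnder_nhds _ N) ht s
  have heq : ∀ r ∈ uIcc a s, r ≠ a → N r = N s := fun r hr hra => by
    refine hloc r s (bddAbove_image_of_isCompact isCompact_uIcc fun q hq =>
      not_not.1 fun hqF => hra ?_)
    obtain rfl := ha q (uIcc_subset_uIcc_right hr hq) hqF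
    exact eq_of_mem_uIcc_of_mem_uIcc hr hq
  refine ⟨a, hat, haF, hloc a s ⟨max (N a) (N s), forall_mem_image.2 fun r hr => ?_⟩⟩
  rcases eq_or_ne r a with rfl | hra
  · exact le_max_left _ _
  · exact (heq r hr hra).trans_le (le_max_right _ _)

theorem eq_of_lowerSemicontinuous_of_forall_bddAbove_image_uIcc (hN : LowerSemicontinuous N)
    (hloc : ∀ a b, BddAbove (N '' uIcc a b) → N a = N b) (a b : ℝ) : N a = N b := by
  suffices hbdd : ∀ t, (𝓝 t).IsBoundedUnder (· ≤ ·) N from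
    hloc a b (bddAbove_image_of_isCompact isCompact_uIcc fun t _ => hbdd t)
  by_contra! hne
  let F := {t | ¬ (𝓝 t).IsBoundedUnder (· ≤ ·) N}
  have : Nonempty F := nonempty_subtype.2 hne
  have : CompleteSpace F := (isClosed_setOf_not_isBoundedUnder_nhds _ N).completeSpace_coe
  obtain ⟨_, ⟨V, hV, rfl⟩, ⟨t, htV⟩, M, hM⟩ :=
    exists_isOpen_bddAbove_image_of_lowerSemicontinuous
      (lowerSemicontinuous_restrict_iff.2 (hN.lowerSemicontinuousOn F))
  obtain ⟨δ, hδ, hball⟩ := Metric.isOpen_iff.1 hV t htV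
  refine t.2 ⟨M, eventually_map.2 ?_⟩
  filter_upwards [ball_mem_nhds (t : ℝ) hδ] with s hs
  obtain ⟨a, has, haF, hNa⟩ := exists_mem_uIcc_not_isBoundedUnder_and_eq hloc t.2 s
  have hsub : uIcc ↑t s ⊆ ball (t : ℝ) δ := by
    rw [← segment_eq_uIcc]
    exact (convex_ball _ _).segment_subset (mem_ball_self hδ) hs
  exact hNa ▸ hM ⟨⟨a, haF⟩, hball (hsub has), rfl⟩

end Baire

section Calculus

theorem sqrt_le_sqrt_add_mul_of_abs_deriv_le {g g' : ℝ → ℝ} {C s t : ℝ} (hC : 0 ≤ C)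
    (hg₀ : ∀ r ∈ uIcc s t, 0 ≤ g r)
    (hg : ∀ r ∈ uIcc s t, HasDerivWithinAt g (g' r) (uIcc s t) r)
    (hg' : ∀ r ∈ uIcc s t, |g' r| ≤ 2 * C * √(g r)) :
    √(g t) ≤ √(g s) + C * |t - s| := by
  -- Adding `ε` keeps the square root differentiable where `g` vanishes.
  have hreg : ∀ ε > 0, √(g t + ε) ≤ √(g s + ε) + C * |t - s| := fun ε hε => by
    have hpos : ∀ r ∈ uIcc s t, 0 < g r + ε := fun r hr =>
      add_pos_of_nonneg_of_pos (hg₀ r hr) hε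
    have hlip := (convex_uIcc s t).norm_image_sub_le_of_norm_hasDerivWithin_le (C := C)
      (fun r hr => ((hg r hr).add_const ε).sqrt (hpos r hr).ne') (fun r hr => ?_)
      left_mem_uIcc right_mem_uIcc
    · rw [Real.norm_eq_abs, Real.norm_eq_abs] at hlip
      linarith [le_abs_self (√(g t + ε) - √(g s + ε))]
    · have hsqrt : 0 < √(g r + ε) := Real.sqrt_pos.2 (hpos r hr)
      rw [norm_div, Real.norm_eq_abs, Real.norm_of_nonneg (by positivity),
        div_le_iff₀ (by positivity)]
      calc |g' r| ≤ 2 * C * √(g r) := hg' r hr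
        _ ≤ 2 * C * √(g r + ε) := by gcongr; linarith
        _ = C * (2 * √(g r + ε)) := by ring
  have hlim : ∀ r, Tendsto (fun ε => √(g r + ε)) (𝓝[>] 0) (𝓝 √(g r)) := fun r => by
    have hcont : Continuous fun ε => √(g r + ε) := by fun_prop
    simpa only [add_zero] using (hcont.tendsto 0).mono_left nhdsWithin_le_nhds
  exact le_of_tendsto_of_tendsto (hlim t) ((hlim s).add_const _)
    (eventually_mem_nhdsWithin.mono hreg)

theorem norm_fderiv_fun_sq {E : Type*} [NormedAddCommGroup E] [NormedSpace ℝ E] {ψ : E → ℝ} {x : E}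
    (hψ : DifferentiableAt ℝ ψ x) :
    ‖fderiv ℝ (fun x => ψ x ^ 2) x‖ = 2 * |ψ x| * ‖fderiv ℝ ψ x‖ := by
  rw [fderiv_fun_pow 2 hψ, norm_smul]
  simp

end Calculus

section Integral

variable {X : Type*} [MeasurableSpace X] {μ : Measure X}

theorem lowerSemicontinuous_integral_of_nonneg {T : Type*} [TopologicalSpace T]
    [FirstCountableTopology T] {f : T → X → ℝ} (hint : ∀ t, Integrable (f t) μ)
    (hcont : ∀ x, Continuous fun t => f t x) (hf : ∀ t x, 0 ≤ f t x) :
    LowerSemicontinuous fun t => ∫ x, f t x ∂μ := by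
  have hlsc : LowerSemicontinuous fun t => ENNReal.ofReal (∫ x, f t x ∂μ) := by
    refine lowerSemicontinuous_iff_le_liminf.2 fun t => ?_
    simp only [ofReal_integral_eq_lintegral_ofReal (hint _) (ae_of_all _ (hf _))]
    calc ∫⁻ x, ENNReal.ofReal (f t x) ∂μ
      _ = ∫⁻ x, liminf (fun s => ENNReal.ofReal (f s x)) (𝓝 t) ∂μ := by
        congr with x
        exact ((ENNReal.continuous_ofReal.comp (hcont x)).tendsto t).liminf_eq.symm
      _ ≤ liminf (fun s => ∫⁻ x, ENNReal.ofReal (f s x) ∂μ) (𝓝 t) :=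
        lintegral_liminf_le' fun s => (hint s).aemeasurable.ennreal_ofReal
  intro t c hc
  rcases lt_or_ge c 0 with hc₀ | hc₀
  · exact .of_forall fun s => hc₀.trans_le (integral_nonneg (hf s))
  · have hc' : ENNReal.ofReal c < ENNReal.ofReal (∫ x, f t x ∂μ) :=
      (ENNReal.ofReal_lt_ofReal_iff_of_nonneg hc₀).2 hc
    exact (hlsc t _ hc').mono fun s => (ENNReal.ofReal_lt_ofReal_iff_of_nonneg hc₀).1

theorem integral_mul_le_sqrt_mul_sqrt {f g : X → ℝ} (hf : MemLp f 2 μ) (hg : MemLp g 2 μ) :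
    ∫ x, f x * g x ∂μ ≤ √(∫ x, f x ^ 2 ∂μ) * √(∫ x, g x ^ 2 ∂μ) := by
  have hnorm : ∫ x, f x * g x ∂μ ≤ ∫ x, ‖f x‖ * ‖g x‖ ∂μ :=
    integral_mono (hf.integrable_mul hg) (hf.norm.integrable_mul hg.norm) fun x => by
      simpa only [norm_mul] using Real.le_norm_self (f x * g x)
  have hholder := integral_mul_norm_le_Lp_mul_Lq Real.HolderConjugate.two_two
    (by simpa using hf) (by simpa using hg)
  simpa only [Real.rpow_two, Real.norm_eq_abs, sq_abs, ← Real.sqrt_eq_rpow] using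
    hnorm.trans hholder

theorem hasDerivAt_integral_of_forall_notMem_eq_zero [TopologicalSpace X] [T2Space X]
    [OpensMeasurableSpace X] [IsFiniteMeasureOnCompacts μ] {E : Type*} [NormedAddCommGroup E]
    [NormedSpace ℝ E] [SecondCountableTopologyEither X E] {K : Set X} (hK : IsCompact K)
    {f f' : ℝ → X → E} (hf : ∀ s, Continuous (f s)) (hf' : Continuous ↿f')
    (hsupp : ∀ s, ∀ x ∉ K, f s x = 0) (hderiv : ∀ s x, HasDerivAt (f · x) (f' s x) s) (t : ℝ) :
    HasDerivAt (fun s => ∫ x, f s x ∂μ) (∫ x, f' t x ∂μ) t := by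
  have hsupp' : ∀ s, ∀ x ∉ K, f' s x = 0 := fun s x hx =>
    (hderiv s x).unique (by simpa only [hsupp _ x hx] using hasDerivAt_const s (0 : E))
  obtain ⟨C, hC⟩ := (isCompact_Icc (a := t - 1) (b := t + 1)).prod hK
    |>.exists_bound_of_continuousOn hf'.continuousOn
  have hmem : Icc (t - 1) (t + 1) ∈ 𝓝 t := Icc_mem_nhds (by linarith) (by linarith)
  refine (hasDerivAt_integral_of_dominated_loc_of_deriv_le (bound := K.indicator fun _ => C) hmem
    (.of_forall fun s => (hf s).aestronglyMeasurable)
    ((hf t).integrable_of_hasCompactSupport (.intro hK (hsupp t)))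
    (by exact (hf'.comp (.prodMk_right t)).aestronglyMeasurable)
    (ae_of_all _ fun x s hs => ?_) ?_ (ae_of_all _ fun x s _ => hderiv s x)).2
  · by_cases hx : x ∈ K
    · exact (hC (s, x) ⟨hs, hx⟩).trans_eq (indicator_of_mem hx fun _ => C).symm
    · simp only [hsupp' s x hx, norm_zero, indicator_of_notMem hx, le_refl]
  · exact (integrable_indicator_iff hK.measurableSet).2 (integrableOn_const hK.measure_lt_top.ne)

end Integral

section Cutoff

variable {E : Type*} [NormedAddCommGroup E] [NormedSpace ℝ E] [FiniteDimensional ℝ E]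

theorem lipschitzWith_normed_convolution [MeasurableSpace E] [BorelSpace E] {F : Type*}
    [NormedAddCommGroup F] [NormedSpace ℝ F] {μ : Measure E} [μ.IsAddHaarMeasure]
    (φ : ContDiffBump (0 : E)) {K : NNReal} {η : E → F} (hη : LipschitzWith K η) :
    LipschitzWith K (φ.normed μ ⋆[ContinuousLinearMap.lsmul ℝ ℝ, μ] η) := by
  have hint : ∀ x, Integrable (fun y => φ.normed μ y • η (x - y)) μ := fun x =>
    (φ.continuous_normed.smul (hη.continuous.comp (by fun_prop))).integrable_of_hasCompactSupport
      φ.hasCompactSupport_normed.smul_right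
  refine LipschitzWith.of_dist_le_mul fun x y => ?_
  calc dist _ _ = ‖∫ z, φ.normed μ z • (η (x - z) - η (y - z)) ∂μ‖ := by
        simp only [dist_eq_norm, convolution_def, ContinuousLinearMap.lsmul_apply, smul_sub,
          integral_sub (hint x) (hint y)]
    _ ≤ ∫ z, φ.normed μ z * (K * dist x y) ∂μ := by
        refine norm_integral_le_of_norm_le (φ.integrable_normed.mul_const _)
          (ae_of_all _ fun z => ?_)
        rw [norm_smul, Real.norm_of_nonneg (φ.nonneg_normed z), ← dist_eq_norm]
        gcongr
        · exact φ.nonneg_normed z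
        · simpa only [dist_sub_right] using hη.dist_le_mul (x - z) (y - z)
    _ = K * dist x y := by rw [integral_mul_const, φ.integral_normed, one_mul]

theorem exists_contDiff_cutoff_norm_fderiv_le {B : Set E} (hB : Bornology.IsBounded B) {δ' δ : ℝ}
    (hδ' : 0 < δ') (hδ : δ' < δ) :
    ∃ ψ : E → ℝ, ContDiff ℝ ∞ ψ ∧ HasCompactSupport ψ ∧ (∀ x, ‖ψ x‖ ≤ 1) ∧
      (∀ x ∈ B, ψ x = 1) ∧ (∀ x ∉ thickening δ B, ψ x = 0) ∧ ∀ x, ‖fderiv ℝ ψ x‖ ≤ δ'⁻¹ := by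
  -- Mollifying the thickened indicator at scale `r` does not increase its Lipschitz constant; the
  -- margin `δ - δ' = 2 * r` absorbs the loss in the supports.
  borelize E
  let μ : Measure E := Measure.addHaar
  obtain ⟨r, hr, hrδ⟩ : ∃ r, 0 < r ∧ δ' + 2 * r = δ := ⟨(δ - δ') / 2, by linarith, by ring⟩
  let φ : ContDiffBump (0 : E) := ⟨r / 2, r, by linarith, by linarith⟩
  let η : E → ℝ := fun x => thickenedIndicator hδ' (thickening r B) x
  let ψ : E → ℝ := φ.normed μ ⋆[ContinuousLinearMap.lsmul ℝ ℝ, μ] η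
  have hη : LipschitzWith δ'.toNNReal⁻¹ η := lipschitzWith_thickenedIndicator hδ' _
  have hψ_eq : ∀ x c, (∀ y ∈ ball x r, η y = c) → ψ x = c := fun x c hc =>
    (φ.normed_convolution_eq_right fun y hy =>
      (hc y hy).trans (hc x (mem_ball_self hr)).symm).trans (hc x (mem_ball_self hr))
  have hψ_one : ∀ x ∈ B, ψ x = 1 := fun x hx => hψ_eq x 1 fun y hy => by
    have hyB : y ∈ thickening r B := mem_thickening_iff.2 ⟨x, hx, hy⟩
    simp only [η, thickenedIndicator_one hδ' _ hyB, NNReal.coe_one]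
  have hψ_zero : ∀ x ∉ thickening δ B, ψ x = 0 := fun x hx => hψ_eq x 0 fun y hy => by
    have hyB : y ∉ thickening δ' (thickening r B) := fun hy' => hx <| by
      rw [← hrδ, show δ' + 2 * r = r + (δ' + r) by ring]
      exact thickening_thickening_subset _ _ _ (mem_thickening_iff.2
        ⟨y, thickening_thickening_subset _ _ _ hy', mem_ball'.1 hy⟩)
    simp only [η, thickenedIndicator_zero hδ' _ hyB, NNReal.coe_zero]
  refine ⟨ψ, φ.hasCompactSupport_normed.contDiff_convolution_left _ φ.contDiff_normed
    hη.continuous.locallyIntegrable, ?_, fun x => ?_, hψ_one, hψ_zero, fun x => ?_⟩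
  · exact .intro hB.thickening.isCompact_closure fun x hx => hψ_zero x fun h =>
      hx (subset_closure h)
  · rw [← dist_zero_right]
    refine dist_convolution_le zero_le_one φ.support_normed_eq.subset φ.nonneg_normed
      φ.integral_normed hη.continuous.aestronglyMeasurable fun y _ => ?_
    simpa [η] using thickenedIndicator_le_one hδ' (thickening r B) y
  · simpa [hδ'.le] using norm_fderiv_le_of_lipschitz ℝ (lipschitzWith_normed_convolution φ hη)

end Cutoff

section Gradient

variable {d : ℕ}

theorem L2On_eq_sqrt (s : Set (Ed d)) (f : Ed d → ℂ) : L2On s f = √(∫ x in s, ‖f x‖ ^ 2) :=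
  (Real.sqrt_eq_rpow _).symm

theorem gradL2_eq_sqrt (f : Ed d → ℂ) : gradL2 f = √(∫ x, gradNormSq f x) :=
  (Real.sqrt_eq_rpow _).symm

theorem gradNormSq_nonneg (f : Ed d → ℂ) (x : Ed d) : 0 ≤ gradNormSq f x :=
  Finset.sum_nonneg fun _ _ => sq_nonneg _

theorem sum_sq_apply_stdBasis (L : Ed d →L[ℝ] ℝ) : ∑ i, L (stdBasis i) ^ 2 = ‖L‖ ^ 2 := by
  rw [(EuclideanSpace.basisFun (Fin d) ℝ).norm_dual L]
  simp [stdBasis]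

theorem norm_sum_fderiv_mul_pd_le (ψ : Ed d → ℝ) (f : Ed d → ℂ) (x : Ed d) :
    ‖∑ i, (fderiv ℝ ψ x (stdBasis i) : ℂ) * pd f i x‖ ≤ ‖fderiv ℝ ψ x‖ * √(gradNormSq f x) :=
  calc ‖∑ i, (fderiv ℝ ψ x (stdBasis i) : ℂ) * pd f i x‖
    _ ≤ ∑ i, |fderiv ℝ ψ x (stdBasis i)| * ‖pd f i x‖ := by
      simpa only [norm_mul, Complex.norm_real, Real.norm_eq_abs] using
        norm_sum_le Finset.univ fun i => (fderiv ℝ ψ x (stdBasis i) : ℂ) * pd f i x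
    _ ≤ √(∑ i, |fderiv ℝ ψ x (stdBasis i)| ^ 2) * √(∑ i, ‖pd f i x‖ ^ 2) :=
      Real.sum_mul_le_sqrt_mul_sqrt _ _ _
    _ = ‖fderiv ℝ ψ x‖ * √(gradNormSq f x) := by
      simp only [sq_abs, sum_sq_apply_stdBasis, Real.sqrt_sq (norm_nonneg _), gradNormSq]

theorem integrable_norm_sq (f : 𝓢(Ed d, ℂ)) : Integrable fun x => ‖f x‖ ^ 2 :=
  (f.memLp 2 volume).integrable_norm_pow two_ne_zero

theorem integrable_gradNormSq (f : 𝓢(Ed d, ℂ)) : Integrable (gradNormSq f) :=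
  integrable_finsetSum _ fun i _ => integrable_norm_sq (∂_{stdBasis i} f : 𝓢(Ed d, ℂ))

theorem continuous_gradNormSq (f : 𝓢(Ed d, ℂ)) : Continuous (gradNormSq f) :=
  continuous_finsetSum _ fun i _ => (∂_{stdBasis i} f : 𝓢(Ed d, ℂ)).continuous.norm.pow 2

theorem memLp_sqrt_gradNormSq (f : 𝓢(Ed d, ℂ)) : MemLp (fun x => √(gradNormSq f x)) 2 := by
  refine (memLp_two_iff_integrable_sq (continuous_gradNormSq f).sqrt.aestronglyMeasurable).2 ?_
  simpa only [Real.sq_sqrt (gradNormSq_nonneg _ _)] using integrable_gradNormSq f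

end Gradient

section Flux

theorem integral_mul_inner_I_mul_lap {d : ℕ} {φ : Ed d → ℝ} (hφ : φ.HasTemperateGrowth)
    (f : 𝓢(Ed d, ℂ)) :
    ∫ x, φ x * ⟪f x, Complex.I * lap f x⟫ =
      -∫ x, ⟪f x, Complex.I * ∑ i, (fderiv ℝ φ x (stdBasis i) : ℂ) * pd f i x⟫ := by
  obtain ⟨B, hB⟩ : ∃ B : ℂ →L[ℝ] ℂ →L[ℝ] ℝ, ∀ z w, B z w = ⟪z, Complex.I * w⟫ :=
    ⟨(innerSL ℝ).bilinearComp (.id ℝ ℂ) (ContinuousLinearMap.mul ℝ ℂ Complex.I), fun _ _ => rfl⟩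
  -- Kills the terms of the integration by parts in which no derivative falls on `φ`.
  have hBself : ∀ z, B z z = 0 := fun z => by simp [hB, Complex.inner]; ring
  have hBint : ∀ g h : 𝓢(Ed d, ℂ), Integrable fun x => B (g x) (h x) := fun g h =>
    (SchwartzMap.bilinLeftCLM B h.hasTemperateGrowth g).integrable
  obtain ⟨φf, hφf⟩ : ∃ φf : 𝓢(Ed d, ℂ), ∀ x, φf x = φ x • f x :=
    ⟨SchwartzMap.smulLeftCLM ℂ φ f, SchwartzMap.smulLeftCLM_apply_apply hφ f⟩
  have hpd : ∀ i x, pd φf i x = φ x • pd f i x + fderiv ℝ φ x (stdBasis i) • f x := fun i x => by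
    rw [pd, funext hφf, fderiv_fun_smul (hφ.1.differentiable (by simp) x) f.differentiableAt]
    rfl
  have hparts : ∀ i, ∫ x, B (φf x) (pd (pd f i) i x) = -∫ x, B (pd φf i x) (pd f i x) := fun i =>
    SchwartzMap.integral_bilinear_lineDerivOp_right_eq_neg_left φf
      (∂_{stdBasis i} f : 𝓢(Ed d, ℂ)) B (stdBasis i)
  calc ∫ x, φ x * ⟪f x, Complex.I * lap f x⟫
    _ = ∫ x, ∑ i, B (φf x) (pd (pd f i) i x) := by
      simp only [lap, hφf, map_smul, smul_apply, smul_eq_mul, ← Finset.mul_sum, ← hB, map_sum]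
    _ = ∑ i, ∫ x, B (φf x) (pd (pd f i) i x) := integral_finsetSum _ fun i _ =>
      hBint φf (∂_{stdBasis i} (∂_{stdBasis i} f : 𝓢(Ed d, ℂ)))
    _ = -∑ i, ∫ x, B (pd φf i x) (pd f i x) := by simp only [hparts, Finset.sum_neg_distrib]
    _ = -∫ x, ∑ i, B (pd φf i x) (pd f i x) := congrArg _ <| .symm <|
      integral_finsetSum _ fun i _ => hBint (∂_{stdBasis i} φf) (∂_{stdBasis i} f)
    _ = -∫ x, ⟪f x, Complex.I * ∑ i, (fderiv ℝ φ x (stdBasis i) : ℂ) * pd f i x⟫ := by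
      simp only [hpd, map_add, map_smul, add_apply, smul_apply, hBself, smul_zero, zero_add,
        ← hB, map_sum, ← Complex.real_smul]

theorem norm_inner_I_mul_sum_fderiv_sq_mul_pd_le {d : ℕ} {ψ : Ed d → ℝ} {x : Ed d}
    (hψ : DifferentiableAt ℝ ψ x) {L : ℝ} (hL : ‖fderiv ℝ ψ x‖ ≤ L) (f : Ed d → ℂ) :
    ‖⟪f x, Complex.I * ∑ i, (fderiv ℝ (fun x => ψ x ^ 2) x (stdBasis i) : ℂ) * pd f i x⟫‖ ≤
      2 * L * (|ψ x| * ‖f x‖ * √(gradNormSq f x)) := by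
  refine (norm_inner_le_norm _ _).trans ?_
  rw [norm_mul, Complex.norm_I, one_mul]
  calc ‖f x‖ * ‖∑ i, (fderiv ℝ (fun x => ψ x ^ 2) x (stdBasis i) : ℂ) * pd f i x‖
    _ ≤ ‖f x‖ * (2 * |ψ x| * ‖fderiv ℝ ψ x‖ * √(gradNormSq f x)) := by
      rw [← norm_fderiv_fun_sq hψ]
      gcongr
      exact norm_sum_fderiv_mul_pd_le _ _ _
    _ ≤ ‖f x‖ * (2 * |ψ x| * L * √(gradNormSq f x)) := by gcongr
    _ = 2 * L * (|ψ x| * ‖f x‖ * √(gradNormSq f x)) := by ring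

theorem abs_integral_sq_mul_inner_I_mul_lap_le {d : ℕ} {ψ : Ed d → ℝ} (hψ : ContDiff ℝ ∞ ψ)
    (hψc : HasCompactSupport ψ) {L : ℝ} (hL : ∀ x, ‖fderiv ℝ ψ x‖ ≤ L) (f : 𝓢(Ed d, ℂ)) :
    |∫ x, ψ x ^ 2 * ⟪f x, Complex.I * lap f x⟫| ≤
      2 * L * √(∫ x, ψ x ^ 2 * ‖f x‖ ^ 2) * gradL2 f := by
  have hsq : (fun x => ψ x ^ 2).HasTemperateGrowth :=
    (hψc.comp_left (zero_pow two_ne_zero)).hasTemperateGrowth (hψ.pow 2)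
  have hmem : MemLp (fun x => |ψ x| * ‖f x‖) 2 :=
    (hψ.continuous.abs.mul f.continuous.norm).memLp_of_hasCompactSupport
      (hψc.comp_left abs_zero).mul_right
  rw [integral_mul_inner_I_mul_lap hsq, abs_neg]
  calc |∫ x, ⟪f x, Complex.I * ∑ i, (fderiv ℝ (fun x => ψ x ^ 2) x (stdBasis i) : ℂ) * pd f i x⟫|
    _ ≤ ∫ x, 2 * L * (|ψ x| * ‖f x‖ * √(gradNormSq f x)) :=
      norm_integral_le_of_norm_le ((hmem.integrable_mul (memLp_sqrt_gradNormSq f)).const_mul _)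
        (ae_of_all _ fun x => norm_inner_I_mul_sum_fderiv_sq_mul_pd_le
          (hψ.differentiable (by simp) x) (hL x) f)
    _ ≤ 2 * L * (√(∫ x, (|ψ x| * ‖f x‖) ^ 2) * √(∫ x, √(gradNormSq f x) ^ 2)) := by
      rw [integral_const_mul]
      gcongr
      · linarith [(norm_nonneg _).trans (hL 0)]
      · exact integral_mul_le_sqrt_mul_sqrt hmem (memLp_sqrt_gradNormSq f)
    _ = 2 * L * √(∫ x, ψ x ^ 2 * ‖f x‖ ^ 2) * gradL2 f := by
      simp only [mul_pow, sq_abs, Real.sq_sqrt (gradNormSq_nonneg _ _), gradL2_eq_sqrt, mul_assoc]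

end Flux

section L2On

variable {d : ℕ}

theorem L2On_mono (f : 𝓢(Ed d, ℂ)) {s t : Set (Ed d)} (hst : s ⊆ t) : L2On s f ≤ L2On t f := by
  simp only [L2On_eq_sqrt]
  exact Real.sqrt_le_sqrt <| setIntegral_mono_set (integrable_norm_sq f).integrableOn
    (ae_of_all _ fun x => sq_nonneg _) hst.eventuallyLE

theorem L2On_le_of_forall_isBounded (f : 𝓢(Ed d, ℂ)) {B : Set (Ed d)} {c : ℝ}
    (hc : ∀ B' ⊆ B, Bornology.IsBounded B' → L2On B' f ≤ c) : L2On B f ≤ c := by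
  have hlim := tendsto_setIntegral_of_monotone (μ := volume.restrict B)
    (fun n : ℕ => measurableSet_closedBall (x := (0 : Ed d)) (ε := n))
    (fun m n hmn => closedBall_subset_closedBall (by exact_mod_cast hmn))
    (integrable_norm_sq f).restrict.integrableOn
  simp only [iUnion_closedBall_nat, Measure.restrict_univ,
    Measure.restrict_restrict measurableSet_closedBall] at hlim
  rw [L2On_eq_sqrt]
  refine le_of_tendsto' hlim.sqrt fun n => ?_
  rw [← L2On_eq_sqrt]
  exact hc _ inter_subset_right (isBounded_closedBall.subset inter_subset_left)

theorem L2On_le_sqrt_integral_sq_mul (f : 𝓢(Ed d, ℂ)) {ψ : Ed d → ℝ} (hψ : Continuous ψ)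
    (hψc : HasCompactSupport ψ) {B : Set (Ed d)} (hB : ∀ x ∈ B, ψ x = 1) :
    L2On B f ≤ √(∫ x, ψ x ^ 2 * ‖f x‖ ^ 2) := by
  have hint : Integrable fun x => ψ x ^ 2 * ‖f x‖ ^ 2 :=
    ((hψ.pow 2).mul (f.continuous.norm.pow 2)).integrable_of_hasCompactSupport
      (hψc.comp_left (zero_pow two_ne_zero)).mul_right
  have hone : MeasurableSet {x | ψ x = 1} := (isClosed_eq hψ continuous_const).measurableSet
  refine (L2On_mono f (t := {x | ψ x = 1}) hB).trans ?_
  rw [L2On_eq_sqrt]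
  refine Real.sqrt_le_sqrt ?_
  calc ∫ x in {x | ψ x = 1}, ‖f x‖ ^ 2 = ∫ x in {x | ψ x = 1}, ψ x ^ 2 * ‖f x‖ ^ 2 :=
        setIntegral_congr_fun hone fun x hx => by simp [show ψ x = 1 from hx]
    _ ≤ ∫ x, ψ x ^ 2 * ‖f x‖ ^ 2 :=
      setIntegral_le_integral hint (ae_of_all _ fun x => by positivity)

theorem sqrt_integral_sq_mul_le_L2On (f : 𝓢(Ed d, ℂ)) {ψ : Ed d → ℝ} {U : Set (Ed d)}
    (hψ : ∀ x, ‖ψ x‖ ≤ 1) (hU : ∀ x ∉ U, ψ x = 0) :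
    √(∫ x, ψ x ^ 2 * ‖f x‖ ^ 2) ≤ L2On U f := by
  rw [L2On_eq_sqrt, ← setIntegral_eq_integral_of_forall_compl_eq_zero (s := U) fun x hx => by
    simp [hU x hx]]
  refine Real.sqrt_le_sqrt <| integral_mono_of_nonneg (ae_of_all _ fun x => by positivity)
    (integrable_norm_sq f).restrict (ae_of_all _ fun x => ?_)
  exact mul_le_of_le_one_left (sq_nonneg _) ((sq_le_one_iff_abs_le_one _).2 (hψ x))

end L2On

theorem thickening_setDist_subset_compl {d : ℕ} (A B : Set (Ed d)) :
    thickening (setDist A B) B ⊆ Aᶜ := by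
  intro x hx hxA
  obtain ⟨y, hyB, hxy⟩ := mem_thickening_iff.mp hx
  have hbdd : BddBelow (image2 dist A B) := ⟨0, by rintro _ ⟨a, -, b, -, rfl⟩; exact dist_nonneg⟩
  exact hxy.not_ge (csInf_le hbdd (mem_image2_of_mem hxA hyB))

namespace IsLinSchrodSol

variable {d : ℕ} {u : ℝ → 𝓢(Ed d, ℂ)} {s t : ℝ}

theorem hasDerivAt (hu : IsLinSchrodSol d u) (t : ℝ) (x : Ed d) :
    HasDerivAt (fun s => u s x) (Complex.I * lap (u t) x) t := by
  have hdiff : DifferentiableAt ℝ (fun s => u s x) t :=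
    ((hu.1.comp (contDiff_id.prodMk contDiff_const)).differentiable (by simp)) t
  exact hu.2 t x ▸ hdiff.hasDerivAt

theorem continuous_I_mul_lap (hu : IsLinSchrodSol d u) :
    Continuous fun p : ℝ × Ed d => Complex.I * lap (u p.1) p.2 := by
  refine ((hu.1.continuous_fderiv (by simp)).clm_apply
    (continuous_const (y := ((1, 0) : ℝ × Ed d)))).congr fun p => ?_
  have hd := (hu.1.differentiable (by simp) p).hasFDerivAt.comp_hasDerivAt p.1
    ((hasDerivAt_id p.1).prodMk (hasDerivAt_const p.1 p.2))
  exact hd.unique (hu.hasDerivAt p.1 p.2)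

theorem continuous_pd (hu : IsLinSchrodSol d u) (i : Fin d) :
    Continuous fun p : ℝ × Ed d => pd (u p.1) i p.2 := by
  refine ((hu.1.continuous_fderiv (by simp)).clm_apply
    (continuous_const (y := ((0, stdBasis i) : ℝ × Ed d)))).congr fun p => ?_
  have hd := HasFDerivAt.comp (f := Prod.mk p.1) p.2
    (hu.1.differentiable (by simp) p).hasFDerivAt (hasFDerivAt_prodMk_right p.1 p.2)
  exact (congrArg (· (stdBasis i)) hd.fderiv).symm

theorem hasDerivAt_integral_mul_norm_sq (hu : IsLinSchrodSol d u) {φ : Ed d → ℝ}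
    (hφ : Continuous φ) (hφc : HasCompactSupport φ) (t : ℝ) :
    HasDerivAt (fun s => ∫ x, φ x * ‖u s x‖ ^ 2)
      (2 * ∫ x, φ x * ⟪u t x, Complex.I * lap (u t) x⟫) t := by
  have hderiv := hasDerivAt_integral_of_forall_notMem_eq_zero (μ := volume) hφc
    (f := fun s x => φ x * ‖u s x‖ ^ 2)
    (f' := fun s x => φ x * (2 * ⟪u s x, Complex.I * lap (u s) x⟫))
    (fun s => hφ.mul ((u s).continuous.norm.pow 2))
    ((hφ.comp continuous_snd).mul
      (continuous_const.mul (hu.1.continuous.inner hu.continuous_I_mul_lap)))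
    (fun s x hx => by rw [image_eq_zero_of_notMem_tsupport hx, zero_mul])
    (fun s x => (hu.hasDerivAt s x).norm_sq.const_mul _) t
  simpa only [mul_left_comm _ (2 : ℝ), integral_const_mul] using hderiv

theorem sqrt_integral_sq_mul_norm_sq_le (hu : IsLinSchrodSol d u) {ψ : Ed d → ℝ}
    (hψ : ContDiff ℝ ∞ ψ) (hψc : HasCompactSupport ψ) {L M : ℝ}
    (hL : ∀ x, ‖fderiv ℝ ψ x‖ ≤ L) (hM : ∀ r ∈ uIcc s t, gradL2 (u r) ≤ M) :
    √(∫ x, ψ x ^ 2 * ‖u t x‖ ^ 2) ≤ √(∫ x, ψ x ^ 2 * ‖u s x‖ ^ 2) + 2 * L * M * |t - s| := by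
  have hL₀ : 0 ≤ L := (norm_nonneg _).trans (hL 0)
  have hM₀ : 0 ≤ M := by
    refine le_trans ?_ (hM s left_mem_uIcc)
    exact gradL2_eq_sqrt (u s) ▸ Real.sqrt_nonneg _
  refine sqrt_le_sqrt_add_mul_of_abs_deriv_le (mul_nonneg (mul_nonneg zero_le_two hL₀) hM₀)
    (fun r _ => integral_nonneg fun x => mul_nonneg (sq_nonneg (ψ x)) (sq_nonneg ‖u r x‖))
    (fun r _ => (hu.hasDerivAt_integral_mul_norm_sq (hψ.continuous.pow 2)
      (hψc.comp_left (zero_pow two_ne_zero)) r).hasDerivWithinAt) fun r hr => ?_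
  rw [abs_mul, abs_two]
  calc 2 * |∫ x, ψ x ^ 2 * ⟪u r x, Complex.I * lap (u r) x⟫|
    _ ≤ 2 * (2 * L * √(∫ x, ψ x ^ 2 * ‖u r x‖ ^ 2) * gradL2 (u r)) := by
      gcongr
      exact abs_integral_sq_mul_inner_I_mul_lap_le hψ hψc hL (u r)
    _ ≤ 2 * (2 * L * √(∫ x, ψ x ^ 2 * ‖u r x‖ ^ 2) * M) := by gcongr; exact hM r hr
    _ = 2 * (2 * L * M) * √(∫ x, ψ x ^ 2 * ‖u r x‖ ^ 2) := by ring

theorem L2On_le_of_isBounded (hu : IsLinSchrodSol d u) {B : Set (Ed d)}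
    (hB : Bornology.IsBounded B) {M : ℝ} (hM : ∀ r ∈ uIcc s t, gradL2 (u r) ≤ M) {δ' δ : ℝ}
    (hδ' : 0 < δ') (hδ : δ' < δ) :
    L2On B (u t) ≤ L2On (thickening δ B) (u s) + 2 * δ'⁻¹ * M * |t - s| := by
  obtain ⟨ψ, hψ, hψc, hψ_le, hψ_one, hψ_zero, hψ_fderiv⟩ :=
    exists_contDiff_cutoff_norm_fderiv_le hB hδ' hδ
  calc L2On B (u t) ≤ √(∫ x, ψ x ^ 2 * ‖u t x‖ ^ 2) :=
        L2On_le_sqrt_integral_sq_mul (u t) hψ.continuous hψc hψ_one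
    _ ≤ √(∫ x, ψ x ^ 2 * ‖u s x‖ ^ 2) + 2 * δ'⁻¹ * M * |t - s| :=
      hu.sqrt_integral_sq_mul_norm_sq_le hψ hψc hψ_fderiv hM
    _ ≤ L2On (thickening δ B) (u s) + 2 * δ'⁻¹ * M * |t - s| := by
      gcongr
      exact sqrt_integral_sq_mul_le_L2On (u s) hψ_le hψ_zero

theorem L2On_le_add_L2On_thickening (hu : IsLinSchrodSol d u) (B : Set (Ed d)) {M : ℝ}
    (hM : ∀ r ∈ uIcc s t, gradL2 (u r) ≤ M) {δ : ℝ} (hδ : 0 < δ) :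
    L2On B (u t) ≤ 2 * |t - s| * M / δ + L2On (thickening δ B) (u s) := by
  refine L2On_le_of_forall_isBounded (u t) fun B' hBB' hB' => ?_
  have hlim : Tendsto (fun δ' => L2On (thickening δ B') (u s) + 2 * δ'⁻¹ * M * |t - s|) (𝓝[<] δ)
      (𝓝 (L2On (thickening δ B') (u s) + 2 * δ⁻¹ * M * |t - s|)) := by
    have hinv := (tendsto_inv₀ hδ.ne').mono_left (nhdsWithin_le_nhds (s := Iio δ))
    exact (((hinv.const_mul 2).mul_const M).mul_const _).const_add _
  have hle : ∀ᶠ δ' in 𝓝[<] δ, L2On B' (u t) ≤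
      L2On (thickening δ B') (u s) + 2 * δ'⁻¹ * M * |t - s| := by
    filter_upwards [Ioo_mem_nhdsLT hδ] with δ' hδ'
    exact hu.L2On_le_of_isBounded hB' hM hδ'.1 hδ'.2
  calc L2On B' (u t) ≤ L2On (thickening δ B') (u s) + 2 * δ⁻¹ * M * |t - s| :=
        ge_of_tendsto hlim hle
    _ ≤ L2On (thickening δ B) (u s) + 2 * δ⁻¹ * M * |t - s| := by
      gcongr
      exact L2On_mono _ (thickening_subset_of_subset _ hBB')
    _ = 2 * |t - s| * M / δ + L2On (thickening δ B) (u s) := by ring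

theorem L2On_univ_le_of_bddAbove (hu : IsLinSchrodSol d u)
    (hbdd : BddAbove ((fun r => ∫ x, gradNormSq (u r) x) '' uIcc s t)) :
    L2On univ (u t) ≤ L2On univ (u s) := by
  obtain ⟨C, hC⟩ := hbdd
  have hgrad : ∀ r ∈ uIcc s t, gradL2 (u r) ≤ √C := fun r hr => by
    rw [gradL2_eq_sqrt]
    exact Real.sqrt_le_sqrt (hC (mem_image_of_mem _ hr))
  have hlim : Tendsto (fun δ => 2 * |t - s| * √C / δ + L2On univ (u s)) atTop
      (𝓝 (L2On univ (u s))) := by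
    simpa only [id, zero_add] using (tendsto_id.const_div_atTop (2 * |t - s| * √C)).add_const _
  refine ge_of_tendsto hlim ((eventually_gt_atTop 0).mono fun δ hδ => ?_)
  exact (hu.L2On_le_add_L2On_thickening univ hgrad hδ).trans
    (add_le_add_right (L2On_mono (u s) (subset_univ _)) _)

theorem integral_norm_sq_eq_of_bddAbove (hu : IsLinSchrodSol d u)
    (hbdd : BddAbove ((fun r => ∫ x, gradNormSq (u r) x) '' uIcc s t)) :
    ∫ x, ‖u s x‖ ^ 2 = ∫ x, ‖u t x‖ ^ 2 := by
  have hnorm : L2On univ (u s) = L2On univ (u t) :=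
    (hu.L2On_univ_le_of_bddAbove (uIcc_comm s t ▸ hbdd)).antisymm (hu.L2On_univ_le_of_bddAbove hbdd)
  simpa only [L2On_eq_sqrt, Measure.restrict_univ,
    Real.sqrt_inj (integral_nonneg fun x => sq_nonneg ‖u _ x‖)
      (integral_nonneg fun x => sq_nonneg ‖u _ x‖)] using hnorm

end IsLinSchrodSol

section Translation

variable {E F : Type*} [NormedAddCommGroup E] [NormedSpace ℝ E] [NormedAddCommGroup F]
  [NormedSpace ℝ F]

theorem exists_norm_apply_add_le (f : 𝓢(E, F)) (k : ℕ) (R : ℝ) :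
    ∃ C, ∀ x v, ‖v‖ ≤ R → ‖f (x + v)‖ ≤ C * ((1 + ‖x‖) ^ k)⁻¹ := by
  obtain ⟨A, hA⟩ : ∃ A, ∀ y, (1 + ‖y‖) ^ k * ‖f y‖ ≤ A :=
    ⟨_, fun y => by
      simpa only [norm_iteratedFDeriv_zero] using SchwartzMap.one_add_le_sup_seminorm_apply
        (𝕜 := ℝ) (m := (k, 0)) le_rfl le_rfl f y⟩
  refine ⟨(1 + R) ^ k * A, fun x v hv => ?_⟩
  have hR : 0 ≤ R := (norm_nonneg v).trans hv
  have hweight : 1 + ‖x‖ ≤ (1 + R) * (1 + ‖x + v‖) := by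
    have hx : ‖x‖ ≤ ‖x + v‖ + ‖v‖ := by simpa using norm_sub_le (x + v) v
    nlinarith [mul_nonneg hR (norm_nonneg (x + v))]
  rw [← div_eq_mul_inv, le_div_iff₀' (by positivity)]
  calc (1 + ‖x‖) ^ k * ‖f (x + v)‖
    _ ≤ ((1 + R) * (1 + ‖x + v‖)) ^ k * ‖f (x + v)‖ := by gcongr
    _ = (1 + R) ^ k * ((1 + ‖x + v‖) ^ k * ‖f (x + v)‖) := by rw [mul_pow, mul_assoc]
    _ ≤ (1 + R) ^ k * A := by gcongr; exact hA _

theorem exists_norm_apply_add_smul_sub_le (f : 𝓢(E, F)) (k : ℕ) (e : E) :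
    ∃ C, ∀ x, ∀ h : ℝ, |h| ≤ 1 → ‖f (x + h • e) - f x‖ ≤ C * ((1 + ‖x‖) ^ k)⁻¹ * |h| := by
  obtain ⟨C, hC⟩ := exists_norm_apply_add_le (∂_{e} f) k ‖e‖
  refine ⟨C, fun x h hh => ?_⟩
  have hderiv : ∀ r ∈ closedBall (0 : ℝ) 1,
      HasDerivWithinAt (fun r : ℝ => f (x + r • e)) (∂_{e} f (x + r • e)) (closedBall 0 1) r := by
    intro r _
    have hline : HasDerivAt (fun r : ℝ => x + r • e) e r := by
      simpa using ((hasDerivAt_id r).smul_const e).const_add x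
    exact (f.differentiableAt.hasFDerivAt.comp_hasDerivAt r hline).hasDerivWithinAt
  have hbound : ∀ r ∈ closedBall (0 : ℝ) 1, ‖∂_{e} f (x + r • e)‖ ≤ C * ((1 + ‖x‖) ^ k)⁻¹ := by
    intro r hr
    refine hC x _ ((norm_smul_le _ _).trans ?_)
    exact mul_le_of_le_one_left (norm_nonneg e) (mem_closedBall_zero_iff.mp hr)
  simpa using (convex_closedBall (0 : ℝ) 1).norm_image_sub_le_of_norm_hasDerivWithin_le hderiv
    hbound (mem_closedBall_self zero_le_one) (mem_closedBall_zero_iff.mpr hh)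

variable [FiniteDimensional ℝ E] [MeasurableSpace E] [BorelSpace E] {μ : Measure E}
  [μ.IsAddHaarMeasure]

theorem tendsto_integral_norm_slope_sq (f : 𝓢(E, F)) (e : E) :
    Tendsto (fun h : ℝ => ∫ x, ‖h⁻¹ • (f (x + h • e) - f x)‖ ^ 2 ∂μ) (𝓝[≠] 0)
      (𝓝 (∫ x, ‖fderiv ℝ f x e‖ ^ 2 ∂μ)) := by
  set k := Module.finrank ℝ E + 1
  obtain ⟨C, hC⟩ := exists_norm_apply_add_smul_sub_le f k e
  have hint : Integrable (fun x : E => C ^ 2 * ((1 + ‖x‖) ^ k)⁻¹ ^ 2) μ := by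
    have hbracket := integrable_one_add_norm (E := E) (μ := μ) (r := (2 * k : ℕ))
      (by norm_cast; omega)
    refine (hbracket.const_mul (C ^ 2)).congr (ae_of_all _ fun x => ?_)
    simp only [Real.rpow_neg (by positivity : 0 ≤ 1 + ‖x‖), Real.rpow_natCast, inv_pow, pow_mul']
  refine tendsto_integral_filter_of_dominated_convergence _ (.of_forall fun h => ?_) ?_ hint
    (ae_of_all _ fun x => ?_)
  · exact Continuous.aestronglyMeasurable (by fun_prop)
  · have hsmall : ∀ᶠ h : ℝ in 𝓝[≠] 0, |h| ≤ 1 := by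
      filter_upwards [nhdsWithin_le_nhds (closedBall_mem_nhds (0 : ℝ) one_pos)] with h hh
      exact mem_closedBall_zero_iff.mp hh
    filter_upwards [self_mem_nhdsWithin, hsmall] with h hh₀ hh₁
    refine ae_of_all _ fun x => ?_
    rw [Real.norm_of_nonneg (sq_nonneg _), ← mul_pow, norm_smul, norm_inv, Real.norm_eq_abs]
    exact pow_le_pow_left₀ (by positivity)
      ((inv_mul_le_iff₀' (abs_pos.mpr hh₀)).mpr (hC x h hh₁)) 2
  · exact (f.differentiableAt.hasFDerivAt.hasLineDerivAt e).tendsto_slope_zero.norm.pow 2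

end Translation

section Linearity

variable {d : ℕ}

theorem pd_sub (f g : 𝓢(Ed d, ℂ)) (i : Fin d) : pd ⇑(f - g) i = pd f i - pd g i := by
  ext x
  exact congrArg (· (stdBasis i)) (fderiv_sub f.differentiableAt g.differentiableAt)

theorem lap_sub (f g : 𝓢(Ed d, ℂ)) (x : Ed d) : lap ⇑(f - g) x = lap f x - lap g x := by
  simp only [lap, pd_sub, ← Finset.sum_sub_distrib]
  refine Finset.sum_congr rfl fun i _ => ?_
  exact congrFun (pd_sub (∂_{stdBasis i} f : 𝓢(Ed d, ℂ)) (∂_{stdBasis i} g) i) x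

theorem pd_comp_sub_const (f : Ed d → ℂ) (a : Ed d) (i : Fin d) :
    pd (fun x => f (x - a)) i = fun x => pd f i (x - a) := by
  ext x
  exact congrArg (· (stdBasis i)) (fderiv_comp_sub (𝕜 := ℝ) (f := f) (x := x) a)

theorem lap_comp_sub_const (f : Ed d → ℂ) (a x : Ed d) :
    lap (fun x => f (x - a)) x = lap f (x - a) := by
  simp only [lap, pd_comp_sub_const]

theorem integral_gradNormSq_comp_sub_const (f : Ed d → ℂ) (a : Ed d) :
    ∫ x, gradNormSq (fun x => f (x - a)) x = ∫ x, gradNormSq f x := by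
  simp only [gradNormSq, pd_comp_sub_const]
  exact integral_sub_right_eq_self (gradNormSq f) a

theorem integral_gradNormSq_sub_le (f g : 𝓢(Ed d, ℂ)) :
    ∫ x, gradNormSq ⇑(f - g) x ≤ 2 * ((∫ x, gradNormSq f x) + ∫ x, gradNormSq g x) := by
  rw [← integral_add (integrable_gradNormSq f) (integrable_gradNormSq g), ← integral_const_mul]
  refine integral_mono (integrable_gradNormSq (f - g))
    (((integrable_gradNormSq f).add (integrable_gradNormSq g)).const_mul 2) fun x => ?_
  simp only [gradNormSq, pd_sub, ← Finset.sum_add_distrib, Finset.mul_sum]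
  refine Finset.sum_le_sum fun i _ => ?_
  calc ‖pd f i x - pd g i x‖ ^ 2 ≤ (‖pd f i x‖ + ‖pd g i x‖) ^ 2 := by
        gcongr; exact norm_sub_le _ _
    _ ≤ 2 * (‖pd f i x‖ ^ 2 + ‖pd g i x‖ ^ 2) := add_sq_le

end Linearity

namespace IsLinSchrodSol

variable {d : ℕ} {u v : ℝ → 𝓢(Ed d, ℂ)} {s t : ℝ}

theorem sub (hu : IsLinSchrodSol d u) (hv : IsLinSchrodSol d v) :
    IsLinSchrodSol d fun t => u t - v t := by
  refine ⟨hu.1.sub hv.1, fun t x => ?_⟩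
  rw [lap_sub, mul_sub]
  exact ((hu.hasDerivAt t x).sub (hv.hasDerivAt t x)).deriv

theorem comp_sub_const (hu : IsLinSchrodSol d u) (a : Ed d) :
    IsLinSchrodSol d fun t => (u t).compSubConstCLM ℂ a := by
  refine ⟨hu.1.comp (contDiff_fst.prodMk (contDiff_snd.sub contDiff_const)), fun t x => ?_⟩
  exact (hu.2 t (x - a)).trans (congrArg _ (lap_comp_sub_const (u t) a x).symm)

theorem integral_norm_translate_sub_sq_eq_of_bddAbove (hu : IsLinSchrodSol d u)
    (hbdd : BddAbove ((fun r => ∫ x, gradNormSq (u r) x) '' uIcc s t)) (a : Ed d) :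
    ∫ x, ‖u s (x - a) - u s x‖ ^ 2 = ∫ x, ‖u t (x - a) - u t x‖ ^ 2 := by
  refine ((hu.comp_sub_const a).sub hu).integral_norm_sq_eq_of_bddAbove ?_
  obtain ⟨C, hC⟩ := hbdd
  refine ⟨2 * (C + C), forall_mem_image.mpr fun r hr => ?_⟩
  have hr' := hC (mem_image_of_mem _ hr)
  calc ∫ x, gradNormSq ⇑((u r).compSubConstCLM ℂ a - u r) x
    _ ≤ 2 * ((∫ x, gradNormSq ((u r).compSubConstCLM ℂ a) x) + ∫ x, gradNormSq (u r) x) :=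
      integral_gradNormSq_sub_le _ _
    _ = 2 * ((∫ x, gradNormSq (u r) x) + ∫ x, gradNormSq (u r) x) := by
      rw [← integral_gradNormSq_comp_sub_const (u r) a]
      rfl
    _ ≤ 2 * (C + C) := by gcongr

theorem integral_gradNormSq_eq_of_bddAbove (hu : IsLinSchrodSol d u)
    (hbdd : BddAbove ((fun r => ∫ x, gradNormSq (u r) x) '' uIcc s t)) :
    ∫ x, gradNormSq (u s) x = ∫ x, gradNormSq (u t) x := by
  have hpd (i : Fin d) : ∫ x, ‖pd (u s) i x‖ ^ 2 = ∫ x, ‖pd (u t) i x‖ ^ 2 := by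
    refine tendsto_nhds_unique (tendsto_integral_norm_slope_sq (u s) (stdBasis i)) ?_
    refine (tendsto_integral_norm_slope_sq (u t) (stdBasis i)).congr fun h => ?_
    have hmass := hu.integral_norm_translate_sub_sq_eq_of_bddAbove hbdd (-(h • stdBasis i))
    simp only [sub_neg_eq_add] at hmass
    simp only [norm_smul, mul_pow, integral_const_mul, hmass]
  have hint (f : 𝓢(Ed d, ℂ)) (i : Fin d) : Integrable fun x => ‖pd f i x‖ ^ 2 :=
    integrable_norm_sq (∂_{stdBasis i} f)
  simp only [gradNormSq, integral_finsetSum _ fun i _ => hint _ i, hpd]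

theorem integral_gradNormSq_eq (hu : IsLinSchrodSol d u) (s t : ℝ) :
    ∫ x, gradNormSq (u s) x = ∫ x, gradNormSq (u t) x := by
  have hcont (x : Ed d) : Continuous fun r => gradNormSq (u r) x :=
    continuous_finsetSum _ fun i _ =>
      ((hu.continuous_pd i).comp (.prodMk_left x)).norm.pow 2
  refine eq_of_lowerSemicontinuous_of_forall_bddAbove_image_uIcc
    (lowerSemicontinuous_integral_of_nonneg (fun r => integrable_gradNormSq (u r)) hcont
      fun r => gradNormSq_nonneg (u r)) (fun _ _ hbdd => ?_) s t
  exact hu.integral_gradNormSq_eq_of_bddAbove hbdd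

theorem gradL2_eq (hu : IsLinSchrodSol d u) (s t : ℝ) : gradL2 (u s) = gradL2 (u t) := by
  simp only [gradL2, hu.integral_gradNormSq_eq s t]

end IsLinSchrodSol

/-- For a Schwartz solution of the linear Schrödinger equation and nonempty sets
`A, B` with `dist(A,B) > 0`, one has
`‖u(t)‖_{L²(B)} ≤ 2 t ‖∇u(0)‖₂ / dist(A,B) + ‖u(0)‖_{L²(ℝ^d ∖ A)}` for all `t ≥ 0`. -/
theorem disturbance_estimate_linear
    {d : ℕ} (hd : 1 ≤ d) (u : ℝ → SchwartzMap (Ed d) ℂ)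
    (hu : IsLinSchrodSol d u)
    (A B : Set (Ed d)) (hA : A.Nonempty) (hB : B.Nonempty)
    (hAB : 0 < setDist A B)
    (t : ℝ) (ht : 0 ≤ t) :
    L2On B (fun x => u t x) ≤
      2 * t * gradL2 (fun x => u 0 x) / setDist A B + L2On Aᶜ (fun x => u 0 x) := by
  have hM : ∀ r ∈ uIcc 0 t, gradL2 (u r) ≤ gradL2 (u 0) := fun r _ => (hu.gradL2_eq r 0).le
  calc L2On B (u t) ≤ 2 * |t - 0| * gradL2 (u 0) / setDist A B
        + L2On (thickening (setDist A B) B) (u 0) := hu.L2On_le_add_L2On_thickening B hM hAB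
    _ ≤ 2 * t * gradL2 (u 0) / setDist A B + L2On Aᶜ (u 0) := by
      rw [sub_zero, abs_of_nonneg ht]
      gcongr
      exact L2On_mono (u 0) (thickening_setDist_subset_compl A B)
end
end
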